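/- Let μ be a non-negative Poisson measure on ℝ^d, let E = ∪_n B(x_n, R_n) be a union of balls with R_n → ∞, and assume that for all distinct λ, λ' ∈ E ∩ supp μ one has μ({λ}) ≥ c > 0 and |λ−λ'| ≥ β > 0, and that |μ̂|(B(0,r)) = O(r^d) as r → ∞. Then there exist N ∈ ℕ, points λ_1,…,λ_N ∈ supp μ, and nondegenerate (invertible) linear operators T_1,…,T_N on ℝ^d such that supp μ = ∪_{j=1}^N (T_j ℤ^d + λ_j) and μ = Σ_{j=1}^N Σ_{λ ∈ T_j ℤ^d + λ_j} Q_j(λ) δ_λ, where each Q_j is a Dirichlet series Q_j(x) = Σ_{ω ∈ Ω_j} q_ω^{(j)} e^{2πi x·ω} with q_ω^{(j)} ∈ ℂ, Σ_{ω ∈ Ω_j} |q_ω^{(j)}| < ∞, and Ω_j a bounded subset of ℝ^d. -/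

import Mathlib

open MeasureTheory Metric Filter Topology Complex SchwartzMap Bornology
open scoped RealInnerProductSpace ENNReal

noncomputable section

/-- A continuous function `g` is *Bohr almost periodic* if for every `ε > 0` its set of
`ε`-almost periods is relatively dense. -/
def IsBohrAP {V : Type*} [SeminormedAddCommGroup V] (g : V → ℂ) : Prop :=
  Continuous g ∧ ∀ ε : ℝ, 0 < ε → ∃ L : ℝ, 0 < L ∧ ∀ x : V, ∃ τ : V,
    dist τ x < L ∧ ∀ y : V, ‖g (y + τ) - g y‖ < ε

/-- A pure point complex measure on `V`, described by its (countably supported) mass function. -/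
structure PPM (V : Type*) where
  mass : V → ℂ
  countable : (Function.support mass).Countable

namespace PPM

variable {V : Type*}

/-- The total variation of a pure point measure, evaluated on a set. -/
def var (μ : PPM V) (A : Set V) : ℝ≥0∞ := ∑' x : A, (‖μ.mass x‖₊ : ℝ≥0∞)

/-- Pairing of a pure point measure with a test function: `∫ φ dμ = Σ_x μ{x}·φ(x)`. -/
def pair (μ : PPM V) (φ : V → ℂ) : ℂ := ∑' x, μ.mass x * φ x

/-- Convolution `(μ ⋆ ψ)(t) = ∫ ψ(t - x) dμ(x)`. -/
def conv [SubtractionMonoid V] (μ : PPM V) (ψ : V → ℂ) (t : V) : ℂ :=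
  ∑' x, μ.mass x * ψ (t - x)

/-- A pure point measure is non-negative if each mass is a non-negative real number. -/
def Nonneg (μ : PPM V) : Prop := ∀ x, μ.mass x = (‖μ.mass x‖ : ℂ)

end PPM

/-- Euclidean space `ℝ^d`. -/
abbrev Ed (d : ℕ) := EuclideanSpace ℝ (Fin d)

variable {d : ℕ}

/-- Local finiteness: the total variation of every ball is finite. -/
def PPM.locFinite (μ : PPM (Ed d)) : Prop := ∀ r : ℝ, μ.var (ball 0 r) < ⊤

/-- The measure is a temperate distribution: it pairs (absolutely) with every Schwartz
function. -/
def PPM.temperate (μ : PPM (Ed d)) : Prop :=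
  ∀ φ : SchwartzMap (Ed d) ℂ, Summable fun x => μ.mass x * φ x

/-- `ν` is the distributional Fourier transform of `μ`: `μ(φ̂) = ν(φ)` on test functions. -/
def IsFT (μ ν : PPM (Ed d)) : Prop :=
  ∀ φ : SchwartzMap (Ed d) ℂ, HasCompactSupport φ →
    μ.pair ⇑(FourierTransform.fourierCLE ℂ (SchwartzMap (Ed d) ℂ) φ) = ν.pair ⇑φ

/-- A Poisson measure: a pure point measure which is a temperate distribution and whose
distributional Fourier transform is a pure point measure. -/
def IsPoisson (μ : PPM (Ed d)) : Prop :=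
  μ.locFinite ∧ μ.temperate ∧ ∃ ν : PPM (Ed d), ν.locFinite ∧ IsFT μ ν


/-- The shifted lattice `T ℤ^d + l`, where `T` is an invertible linear operator on `ℝ^d`. -/
def latt {d : ℕ} (T : Ed d ≃ₗ[ℝ] Ed d) (l : Ed d) : Set (Ed d) :=
  {x : Ed d | ∃ m : Fin d → ℤ, x = T ((WithLp.equiv 2 (Fin d → ℝ)).symm fun i => (m i : ℝ)) + l}

/-- The value at `x` of the Dirichlet series `Σ_ω q_ω e^{2πi x·ω}`. -/
def dser {d : ℕ} (q : ℕ → ℂ) (ω : ℕ → Ed d) (x : Ed d) : ℂ :=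
  ∑' i : ℕ, q i * Complex.exp (((2 * Real.pi * ⟪x, ω i⟫ : ℝ) : ℂ) * Complex.I)

set_option linter.unusedVariables false
set_option linter.unusedSectionVars false
set_option linter.deprecated false

section ops

variable {H : Type*} [NormedAddCommGroup H] [InnerProductSpace ℂ H]

/-- weak operator limits along ultrafilters. -/
theorem exists_wlim [CompleteSpace H] (u : Ultrafilter ℕ) (W : ℕ → H →L[ℂ] H)
    (hW : ∀ i b, ‖W i b‖ ≤ ‖b‖) :
    ∃ h : H →L[ℂ] H, (∀ a b, Tendsto (fun i => (inner ℂ (a) (W i b))) u (𝓝 (inner ℂ (a) (h b)))) ∧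
      ∀ b, ‖h b‖ ≤ ‖b‖ := by
  have hex : ∀ a b : H, ∃ z : ℂ, Tendsto (fun i => (inner ℂ (W i b) (a))) u (𝓝 z) ∧ ‖z‖ ≤ ‖b‖ * ‖a‖ := by
    intro a b
    have hc : IsCompact (Metric.closedBall (0:ℂ) (‖b‖ * ‖a‖)) := isCompact_closedBall _ _
    have := hc.ultrafilter_le_nhds (u.map (fun i => (inner ℂ (W i b) (a)))) (by
      rw [le_principal_iff]
      refine Filter.mem_map.2 (Filter.Eventually.of_forall fun i => ?_)
      simp only [Metric.mem_closedBall, dist_zero_right]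
      exact (norm_inner_le_norm _ _).trans (by gcongr; exact hW i b))
    obtain ⟨z, hz, hz'⟩ := this
    refine ⟨z, hz', by simpa using hz⟩
  choose L hL hLn using hex
  have huniq : ∀ a b z, Tendsto (fun i => (inner ℂ (W i b) (a))) u (𝓝 z) → L a b = z :=
    fun a b z hz => tendsto_nhds_unique (hL a b) hz
  let F : H → (H →L[ℂ] ℂ) := fun b => LinearMap.mkContinuous
    { toFun := fun a => L a b
      map_add' := fun a a' => huniq _ _ _ (by
        simpa only [inner_add_right] using (hL a b).add (hL a' b))
      map_smul' := fun r a => huniq _ _ _ (by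
        simpa only [inner_smul_right, smul_eq_mul, RingHom.id_apply] using (hL a b).const_mul r) }
    ‖b‖ (fun a => hLn a b)
  let g : H → H := fun b => (InnerProductSpace.toDual ℂ H).symm (F b)
  have hg : ∀ a b, (inner ℂ (g b) (a)) = L a b := by
    intro a b
    simp [g, F, InnerProductSpace.toDual_symm_apply]
  have hgn : ∀ b, ‖g b‖ ≤ ‖b‖ := by
    intro b
    simp only [g, LinearIsometryEquiv.norm_map]
    exact LinearMap.mkContinuous_norm_le _ (norm_nonneg _) _
  let h : H →L[ℂ] H := LinearMap.mkContinuous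
    { toFun := g
      map_add' := fun b b' => by
        refine ext_inner_right ℂ fun a => ?_
        rw [inner_add_left, hg, hg, hg]
        exact huniq _ _ _ (by simpa only [map_add, inner_add_left] using (hL a b).add (hL a b'))
      map_smul' := fun r b => by
        refine ext_inner_right ℂ fun a => ?_
        rw [inner_smul_left, hg, hg]
        exact huniq _ _ _ (by
          simpa only [map_smul, inner_smul_left, RingHom.id_apply] using (hL a b).const_mul _) }
    1 (fun b => by simpa using hgn b)
  refine ⟨h, fun a b => ?_, fun b => hgn b⟩
  have h1 := (hL a b)
  rw [← hg] at h1
  have := (Complex.continuous_conj.tendsto _).comp h1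
  simp only [Function.comp_def, inner_conj_symm] at this
  exact this

/-- A unitary representation (with bare hands). -/
structure URep (V : Type*) [AddCommGroup V] (H : Type*) [NormedAddCommGroup H]
    [InnerProductSpace ℂ H] where
  U : V → H →L[ℂ] H
  zero : U 0 = 1
  add : ∀ x y, U (x + y) = U x * U y
  adj : ∀ x a b, (inner ℂ (U x a) (b)) = (inner ℂ (a) (U (-x) b))

variable {V : Type*} [AddCommGroup V]

theorem URep.norm (R : URep V H) (x : V) (a : H) : ‖R.U x a‖ = ‖a‖ := by
  have h : (inner ℂ (R.U x a) (R.U x a)) = (inner ℂ (a) (a)) := by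
    rw [R.adj, ← ContinuousLinearMap.mul_apply, ← R.add, neg_add_cancel, R.zero]; rfl
  rw [inner_self_eq_norm_sq_to_K, inner_self_eq_norm_sq_to_K] at h
  have h2 : ‖R.U x a‖ ^ 2 = ‖a‖ ^ 2 := by exact_mod_cast h
  exact (sq_eq_sq₀ (norm_nonneg _) (norm_nonneg _)).1 h2

theorem URep.comm (R : URep V H) (x y : V) : Commute (R.U x) (R.U y) := by
  unfold Commute SemiconjBy
  rw [← R.add, ← R.add, add_comm]

/-- commuting with the representation -/
def URep.Comm (R : URep V H) (Z : H →L[ℂ] H) : Prop := ∀ x, Commute Z (R.U x)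

variable [CompleteSpace H]

theorem URep.exists_h (R : URep V H) (u : Ultrafilter ℕ) (γ : ℕ → V) :
    ∃ h : H →L[ℂ] H, (∀ a b, Tendsto (fun i => (inner ℂ (a) (R.U (γ i) b))) u (𝓝 (inner ℂ (a) (h b)))) ∧
      ∀ b, ‖h b‖ ≤ ‖b‖ :=
  exists_wlim u _ (fun i b => (R.norm _ _).le)

def URep.h (R : URep V H) (u : Ultrafilter ℕ) (γ : ℕ → V) : H →L[ℂ] H :=
  (R.exists_h u γ).choose

theorem URep.h_lim (R : URep V H) (u : Ultrafilter ℕ) (γ : ℕ → V) (a b : H) :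
    Tendsto (fun i => (inner ℂ (a) (R.U (γ i) b))) u (𝓝 (inner ℂ (a) (R.h u γ b))) :=
  (R.exists_h u γ).choose_spec.1 a b

theorem URep.h_norm (R : URep V H) (u : Ultrafilter ℕ) (γ : ℕ → V) (b : H) :
    ‖R.h u γ b‖ ≤ ‖b‖ :=
  (R.exists_h u γ).choose_spec.2 b

theorem URep.h_commute (R : URep V H) (u : Ultrafilter ℕ) (γ : ℕ → V) {Z : H →L[ℂ] H}
    (hZ : R.Comm Z) : Commute Z (R.h u γ) := by
  apply ContinuousLinearMap.ext
  intro b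
  refine ext_inner_left ℂ fun a => ?_
  simp only [ContinuousLinearMap.mul_apply]
  rw [← ContinuousLinearMap.adjoint_inner_left]
  refine tendsto_nhds_unique (R.h_lim u γ _ b) ((R.h_lim u γ a (Z b)).congr fun i => ?_)
  rw [ContinuousLinearMap.adjoint_inner_left, ← ContinuousLinearMap.mul_apply,
    ← ContinuousLinearMap.mul_apply, (hZ (γ i)).eq]

theorem URep.comm_U (R : URep V H) (x : V) : R.Comm (R.U x) := fun y => R.comm x y

theorem URep.comm_h (R : URep V H) (u : Ultrafilter ℕ) (γ : ℕ → V) : R.Comm (R.h u γ) :=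
  fun x => (R.h_commute u γ (R.comm_U x)).symm

theorem URep.comm_mul (R : URep V H) {Z Y : H →L[ℂ] H} (hZ : R.Comm Z) (hY : R.Comm Y) :
    R.Comm (Z * Y) := fun x => (hZ x).mul_left (hY x)

theorem URep.comm_one (R : URep V H) : R.Comm (1 : H →L[ℂ] H) := fun x => Commute.one_left _

theorem URep.h_adj (R : URep V H) (u : Ultrafilter ℕ) (γ : ℕ → V) (a b : H) :
    (inner ℂ (R.h u γ a) (b)) = (inner ℂ (a) (R.h u (fun i => - γ i) b)) := by
  have h1 := (Complex.continuous_conj.tendsto _).comp (R.h_lim u γ b a)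
  simp only [Function.comp_def, inner_conj_symm, R.adj] at h1
  exact tendsto_nhds_unique h1 (R.h_lim u (fun i => - γ i) a b)

end ops


section ops2

variable {H : Type*} [NormedAddCommGroup H] [InnerProductSpace ℂ H] [CompleteSpace H]
  {V : Type*} [AddCommGroup V]

/-- The function attached to an operator. -/
def URep.f (R : URep V H) (v w : H) (Z : H →L[ℂ] H) (x : V) : ℂ := inner ℂ w (Z (R.U x v))

theorem URep.f_h (R : URep V H) (v w : H) (u : Ultrafilter ℕ) (γ : ℕ → V) {Z : H →L[ℂ] H}
    (hZ : R.Comm Z) (x : V) :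
    Tendsto (fun i => R.f v w Z (x + γ i)) u (𝓝 (R.f v w (R.h u γ * Z) x)) := by
  refine (R.h_lim u γ w (Z (R.U x v))).congr fun i => ?_
  unfold URep.f
  rw [add_comm, R.add, ← mul_apply_eq_comp, ← mul_apply_eq_comp, ← mul_apply_eq_comp, ← mul_assoc,
    (hZ (γ i)).eq, mul_assoc]

/-- Admissible sequence. -/
def Admis (m : V → ℂ) (u : Ultrafilter ℕ) (γ : ℕ → V) : Prop :=
  ∀ x, (∀ᶠ i in (u : Filter ℕ), m (x + γ i) = 0) ∨ Tendsto (fun i => m (x + γ i)) u (𝓝 (m x))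

/-- Good operators. -/
structure URep.Good (R : URep V H) (v w : H) (Z : H →L[ℂ] H) : Prop where
  comm : R.Comm Z
  val : ∀ x, R.f v w Z x = 0 ∨ R.f v w Z x = R.f v w 1 x

theorem URep.Good.one (R : URep V H) (v w : H) : R.Good v w 1 := ⟨R.comm_one, fun x => Or.inr rfl⟩

variable {R : URep V H} {v w : H} {u : Ultrafilter ℕ} {γ : ℕ → V}

theorem URep.Good.h {Z : H →L[ℂ] H} (hZ : R.Good v w Z) (hγ : Admis (R.f v w 1) u γ) :
    R.Good v w (R.h u γ * Z) := by
  refine ⟨R.comm_mul (R.comm_h u γ) hZ.comm, fun x => ?_⟩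
  have hl := R.f_h v w u γ hZ.comm x
  have hor : ∀ᶠ i in (u : Filter ℕ), R.f v w Z (x + γ i) = 0 ∨ R.f v w Z (x + γ i) = R.f v w 1 (x + γ i) :=
    Eventually.of_forall fun i => hZ.val _
  rcases Ultrafilter.eventually_or.1 hor with h0 | h1
  · left
    exact tendsto_nhds_unique hl (tendsto_const_nhds.congr' (h0.mono fun i hi => hi.symm))
  · rcases hγ x with h2 | h2
    · left
      refine tendsto_nhds_unique hl (tendsto_const_nhds.congr' ?_)
      filter_upwards [h1, h2] with i a b
      rw [a, b]
    · right
      refine tendsto_nhds_unique hl (h2.congr' (h1.mono fun i hi => hi.symm))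

/-- Domination of supports. -/
def URep.Dom (R : URep V H) (v w : H) (Z Y : H →L[ℂ] H) : Prop :=
  ∀ x, R.f v w Z x ≠ 0 → R.f v w Y x ≠ 0

theorem URep.Good.dom_one {Z : H →L[ℂ] H} (hZ : R.Good v w Z) : R.Dom v w Z 1 := by
  intro x hx
  rcases hZ.val x with h | h
  · exact absurd h hx
  · rwa [← h]

theorem URep.Dom.h {Z Y : H →L[ℂ] H} (hZ : R.Good v w Z) (hY : R.Good v w Y)
    (hd : R.Dom v w Z Y) : R.Dom v w (R.h u γ * Z) (R.h u γ * Y) := by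
  intro x hx
  have hl := R.f_h v w u γ hZ.comm x
  have hl' := R.f_h v w u γ hY.comm x
  have h1 : ∀ᶠ i in (u : Filter ℕ), R.f v w Z (x + γ i) ≠ 0 := by
    refine hl.eventually_ne hx
  have h2 : Tendsto (fun i => R.f v w Y (x + γ i)) u (𝓝 (R.f v w (R.h u γ * Z) x)) := by
    refine hl.congr' ?_
    filter_upwards [h1] with i hi
    rcases hZ.val (x + γ i) with h | h
    · exact absurd h hi
    · rcases hY.val (x + γ i) with h' | h'
      · exact absurd h' (hd _ hi)
      · rw [h, h']
  rw [tendsto_nhds_unique hl' h2]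
  exact hx

end ops2


section ops3

variable {H : Type*} [NormedAddCommGroup H] [InnerProductSpace ℂ H] [CompleteSpace H]
  {V : Type*} [AddCommGroup V]

def URep.T (R : URep V H) (u : Ultrafilter ℕ) (γ : ℕ → V) : H →L[ℂ] H :=
  R.h u (fun i => - γ i) * R.h u γ

variable {R : URep V H} {v w : H} {u : Ultrafilter ℕ} {γ : ℕ → V}

theorem URep.comm_T : R.Comm (R.T u γ) := R.comm_mul (R.comm_h _ _) (R.comm_h _ _)

theorem URep.comm_pow {Z : H →L[ℂ] H} (hZ : R.Comm Z) (n : ℕ) : R.Comm (Z ^ n) :=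
  fun x => (hZ x).pow_left n

theorem URep.T_norm (b : H) : ‖R.T u γ b‖ ≤ ‖b‖ :=
  (R.h_norm u _ _).trans (R.h_norm u γ b)

theorem URep.T_inner (a b : H) :
    (inner ℂ a (R.T u γ b) : ℂ) = inner ℂ (R.h u γ a) (R.h u γ b) := by
  rw [R.h_adj]; rfl

theorem URep.h_h_comm (u : Ultrafilter ℕ) (γ γ' : ℕ → V) :
    Commute (R.h u γ) (R.h u γ') := R.h_commute u γ' (R.comm_h u γ)

theorem URep.T_comm_h : Commute (R.T u γ) (R.h u γ) :=
  R.h_commute u γ (URep.comm_T)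

theorem URep.Good.T {Z : H →L[ℂ] H} (hZ : R.Good v w Z) (hγ : Admis (R.f v w 1) u γ)
    (hγ' : Admis (R.f v w 1) u (fun i => - γ i)) : R.Good v w (R.T u γ * Z) := by
  unfold URep.T
  rw [mul_assoc]
  exact (hZ.h hγ).h hγ'

theorem URep.Good.Tpow {Z : H →L[ℂ] H} (hZ : R.Good v w Z) (hγ : Admis (R.f v w 1) u γ)
    (hγ' : Admis (R.f v w 1) u (fun i => - γ i)) (n : ℕ) : R.Good v w (R.T u γ ^ n * Z) := by
  induction n with
  | zero => simpa using hZ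
  | succ n ih =>
    rw [pow_succ', mul_assoc]
    exact ih.T hγ hγ'

theorem URep.Dom.T {Z Y : H →L[ℂ] H} (hZ : R.Good v w Z) (hY : R.Good v w Y)
    (hγ : Admis (R.f v w 1) u γ)
    (hd : R.Dom v w Z Y) : R.Dom v w (R.T u γ * Z) (R.T u γ * Y) := by
  unfold URep.T
  rw [mul_assoc, mul_assoc]
  exact URep.Dom.h (hZ.h hγ) (hY.h hγ) (URep.Dom.h hZ hY hd)

theorem URep.Dom.Tpow {Z Y : H →L[ℂ] H} (hZ : R.Good v w Z) (hY : R.Good v w Y)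
    (hγ : Admis (R.f v w 1) u γ)
    (hγ' : Admis (R.f v w 1) u (fun i => - γ i))
    (hd : R.Dom v w Z Y) (n : ℕ) : R.Dom v w (R.T u γ ^ n * Z) (R.T u γ ^ n * Y) := by
  induction n with
  | zero => simpa using hd
  | succ n ih =>
    rw [pow_succ', mul_assoc, mul_assoc]
    exact URep.Dom.T (hZ.Tpow hγ hγ' n) (hY.Tpow hγ hγ' n) hγ ih

/-- limits of averages -/
theorem avg_tendsto (S : H →L[ℂ] H) (hS : ∀ b, ‖S b‖ ≤ ‖b‖) (w y : H) :
    Tendsto (fun N : ℕ => (N : ℂ)⁻¹ * ∑ n ∈ Finset.range N, (inner ℂ w ((S ^ n) y) : ℂ)) atTop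
      (𝓝 (inner ℂ w (((S.eqLocus (1 : H →L[ℂ] H)).orthogonalProjectionOnto y : H)))) := by
  have h1 : ‖S‖ ≤ 1 := S.opNorm_le_bound zero_le_one (by simpa using hS)
  have h2 := S.tendsto_birkhoffAverage_orthogonalProjection h1 y
  have h3 : Tendsto (fun N => (inner ℂ w (birkhoffAverage ℂ S _root_.id N y) : ℂ)) atTop (𝓝 _) :=
    (tendsto_const_nhds (x := w)).inner h2
  refine h3.congr fun N => ?_
  rw [birkhoffAverage, birkhoffSum, inner_smul_right, inner_sum]
  congr 1
  refine Finset.sum_congr rfl fun n _ => ?_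
  congr 1
  simp

theorem cesaro_const (z z0 : ℂ) (a : ℕ → ℂ) (ha : ∀ n, a (n + 1) = z) (h0 : a 0 = z0) :
    Tendsto (fun N : ℕ => (N : ℂ)⁻¹ * ∑ n ∈ Finset.range N, a n) atTop (𝓝 z) := by
  have : Tendsto a atTop (𝓝 z) := by
    rw [← tendsto_add_atTop_iff_nat 1]
    simp [ha]
  have h := this.cesaro_smul
  refine h.congr fun N => ?_
  rw [← Complex.ofReal_natCast, ← Complex.ofReal_inv]
  simp

/-- Claim 1 -/
theorem URep.claim1 (hγ : Admis (R.f v w 1) u γ)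
    (hγ' : Admis (R.f v w 1) u (fun i => - γ i)) {x : V} (hx : R.f v w (R.h u γ) x ≠ 0) (n : ℕ) :
    R.f v w (R.T u γ ^ n * R.h u γ) x ≠ 0 := by
  induction n with
  | zero => simpa using hx
  | succ N ih =>
    intro h0
    have hhg : R.Good v w (R.h u γ) := by simpa using (URep.Good.one R v w).h hγ
    -- decreasing
    have hdec : ∀ n, N + 1 ≤ n → R.f v w (R.T u γ ^ n * R.h u γ) x = 0 := by
      intro n hn
      induction n, hn using Nat.le_induction with
      | base => exact h0
      | succ n hn ih2 =>
        by_contra hne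
        have hd : R.Dom v w (R.T u γ * R.h u γ) (R.h u γ) := by
          have := URep.Dom.h (u := u) (γ := γ) ((URep.Good.one R v w).T hγ hγ') (URep.Good.one R v w)
            ((URep.Good.one R v w).T hγ hγ').dom_one
          rw [mul_one, mul_one] at this
          rwa [URep.T_comm_h.eq]
        have := URep.Dom.Tpow (hhg.T hγ hγ') hhg hγ hγ' hd n x (by
          rwa [← mul_assoc, ← pow_succ])
        exact this ih2
    set y : H := (R.T u γ ^ N * R.h u γ) (R.U x v) with hy
    have hk : ∀ k j : ℕ, (inner ℂ w (((1 - R.T u γ) ^ k) ((R.T u γ ^ j) y)) : ℂ)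
        = if j = 0 then inner ℂ w y else 0 := by
      intro k
      induction k with
      | zero =>
        intro j
        split_ifs with hj
        · simp [hj]
        · have := hdec (j + N) (by omega)
          rw [pow_add, mul_assoc] at this
          simpa [URep.f, hy] using this
      | succ k ihk =>
        intro j
        have e1 : ((1 - R.T u γ) ^ (k+1)) ((R.T u γ ^ j) y) =
          ((1 - R.T u γ) ^ k) ((R.T u γ ^ j) y) - ((1 - R.T u γ) ^ k) ((R.T u γ ^ (j+1)) y) := by
          rw [pow_succ, pow_succ' (R.T u γ) j]
          rw [mul_apply_eq_comp, mul_apply_eq_comp, ← map_sub]; rfl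
        rw [e1, inner_sub_right, ihk, ihk]
        simp
    have hS : ∀ b, ‖(1 - R.T u γ) b‖ ≤ ‖b‖ := by
      intro b
      have hsq : ‖b - R.T u γ b‖ ^ 2 = ‖b‖ ^ 2 - 2 * ‖R.h u γ b‖ ^ 2 + ‖R.T u γ b‖ ^ 2 := by
        rw [@norm_sub_sq ℂ, URep.T_inner, inner_self_eq_norm_sq_to_K]
        norm_cast
      have h1 : ‖R.T u γ b‖ ≤ ‖R.h u γ b‖ := R.h_norm u _ _
      have h2 : ‖R.T u γ b‖ ^ 2 ≤ ‖R.h u γ b‖ ^ 2 := by gcongr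
      have : ‖(1 - R.T u γ) b‖ = ‖b - R.T u γ b‖ := by simp
      rw [this]
      refine (sq_le_sq₀ (norm_nonneg _) (norm_nonneg _)).1 ?_
      nlinarith [sq_nonneg ‖R.h u γ b‖]
    have hlim := avg_tendsto (1 - R.T u γ) hS w y
    have hk0 : ∀ k, (inner ℂ w (((1 - R.T u γ : H →L[ℂ] H) ^ k) y) : ℂ) = inner ℂ w y := by
      intro k
      simpa using hk k 0
    have hlim2 := cesaro_const (inner ℂ w y) (inner ℂ w y)
      (fun k => (inner ℂ w (((1 - R.T u γ : H →L[ℂ] H) ^ k) y) : ℂ)) (fun k => hk0 _) (hk0 0)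
    have heq := tendsto_nhds_unique hlim hlim2
    have hproj : ((1 - R.T u γ).eqLocus (1 : H →L[ℂ] H)).orthogonalProjectionOnto y = 0 := by
      rw [Submodule.orthogonalProjectionOnto_eq_zero_iff, Submodule.mem_orthogonal]
      intro z hz
      have hz1 : R.T u γ z = 0 := by simpa using hz
      have hz2 : ∀ γ' : ℕ → V, (∀ a : H, ‖R.h u γ' a‖ ^ 2 = RCLike.re (inner ℂ a (R.T u γ a) : ℂ)) →
          R.h u γ' z = 0 := by
        intro γ' h
        have := h z
        rw [hz1] at this
        simpa using this
      have hz3 : R.h u (fun i => - γ i) z = 0 := by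
        apply hz2
        intro a
        unfold URep.T
        rw [(URep.h_h_comm u _ _).eq, mul_apply_eq_comp]
        have := R.h_adj u (fun i => - γ i) a (R.h u (fun i => - γ i) a)
        simp only [neg_neg] at this
        rw [← this, inner_self_eq_norm_sq]
      have hyr : y = R.h u γ ((R.T u γ ^ N) (R.U x v)) := by
        rw [hy, ((URep.T_comm_h (R := R) (u := u) (γ := γ)).pow_left N).eq]; rfl
      rw [hyr]
      have := R.h_adj u (fun i => - γ i) z ((R.T u γ ^ N) (R.U x v))
      simp only [neg_neg] at this
      rw [← this, hz3, inner_zero_left]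
    rw [hproj] at heq
    apply ih
    simpa [URep.f, hy] using heq.symm

end ops3


section ops4

variable {H : Type*} [NormedAddCommGroup H] [InnerProductSpace ℂ H] [CompleteSpace H]
  {V : Type*} [AddCommGroup V]
variable {R : URep V H} {v w : H} {u : Ultrafilter ℕ} {γ : ℕ → V}

/-- The projection attached to a class. -/
def URep.e (R : URep V H) (u : Ultrafilter ℕ) (γ : ℕ → V) : H →L[ℂ] H :=
  ((R.T u γ).eqLocus (1 : H →L[ℂ] H)).starProjection

theorem URep.e_lim (w y : H) :
    Tendsto (fun N : ℕ => (N : ℂ)⁻¹ * ∑ n ∈ Finset.range N, (inner ℂ w ((R.T u γ ^ n) y) : ℂ)) atTop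
      (𝓝 (inner ℂ w (R.e u γ y))) :=
  avg_tendsto _ URep.T_norm w y

theorem URep.e_symm (a b : H) : (inner ℂ (R.e u γ a) b : ℂ) = inner ℂ a (R.e u γ b) :=
  Submodule.inner_starProjection_left_eq_right _ a b

theorem URep.T_e (a : H) : R.T u γ (R.e u γ a) = R.e u γ a := by
  have : R.e u γ a ∈ (R.T u γ).eqLocus (1 : H →L[ℂ] H) := Submodule.starProjection_apply_mem _ a
  simpa using this

theorem URep.e_idem : R.e u γ * R.e u γ = R.e u γ :=
  ContinuousLinearMap.ext fun a =>
    Submodule.starProjection_eq_self_iff.2 (Submodule.starProjection_apply_mem _ a)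

theorem URep.e_commute {Z : H →L[ℂ] H} (hZ : R.Comm Z) : Commute Z (R.e u γ) := by
  apply ContinuousLinearMap.ext
  intro b
  refine ext_inner_left ℂ fun a => ?_
  rw [mul_apply_eq_comp, mul_apply_eq_comp, ← ContinuousLinearMap.adjoint_inner_left]
  refine tendsto_nhds_unique (URep.e_lim _ b) ((URep.e_lim a (Z b)).congr fun N => ?_)
  congr 1
  refine Finset.sum_congr rfl fun n _ => ?_
  rw [ContinuousLinearMap.adjoint_inner_left, ← mul_apply_eq_comp, ← mul_apply_eq_comp]
  have : Commute Z (R.T u γ) := (R.h_commute _ _ hZ).mul_right (R.h_commute _ _ hZ)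
  rw [(this.pow_right n).eq]

theorem URep.comm_e : R.Comm (R.e u γ) := fun x => (URep.e_commute (R.comm_U x)).symm

theorem URep.f_e_lim {Z : H →L[ℂ] H} (x : V) :
    Tendsto (fun N : ℕ => (N : ℂ)⁻¹ * ∑ n ∈ Finset.range N, R.f v w (R.T u γ ^ n * Z) x) atTop
      (𝓝 (R.f v w (R.e u γ * Z) x)) :=
  URep.e_lim w (Z (R.U x v))

theorem URep.f_e_zero {B : H →L[ℂ] H} (hB : R.Comm B) (h0 : ∀ x, R.f v w B x = 0) (x : V) :
    R.f v w (R.e u γ * B) x = 0 := by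
  have hz : ∀ (γ' : ℕ → V) (B : H →L[ℂ] H), R.Comm B → (∀ x, R.f v w B x = 0) →
      ∀ x, R.f v w (R.h u γ' * B) x = 0 := by
    intro γ' B hB h0 x
    refine tendsto_nhds_unique (R.f_h v w u γ' hB x) ?_
    simp [h0]
  have hT : ∀ n, R.Comm (R.T u γ ^ n * B) ∧ ∀ x, R.f v w (R.T u γ ^ n * B) x = 0 := by
    intro n
    refine ⟨R.comm_mul (URep.comm_pow URep.comm_T n) hB, ?_⟩
    induction n with
    | zero => simpa using h0
    | succ n ih =>
      intro x
      rw [pow_succ', mul_assoc]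
      unfold URep.T
      rw [mul_assoc]
      refine hz _ _ (R.comm_mul (R.comm_h _ _) (R.comm_mul (URep.comm_pow URep.comm_T n) hB)) ?_ x
      exact hz _ _ (R.comm_mul (URep.comm_pow URep.comm_T n) hB) ih
  refine tendsto_nhds_unique (URep.f_e_lim x) ?_
  simp [(hT _).2]

theorem URep.f_e_off (hγ : Admis (R.f v w 1) u γ)
    (hγ' : Admis (R.f v w 1) u (fun i => - γ i)) {Z : H →L[ℂ] H} (hZ : R.Good v w Z) {x : V}
    (hx : R.f v w (R.h u γ) x = 0) : R.f v w (R.e u γ * Z) x = 0 := by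
  refine tendsto_nhds_unique (URep.f_e_lim x) ?_
  refine cesaro_const 0 _ _ (fun n => ?_) rfl
  by_contra hne
  have hg : R.Good v w (R.h u (fun i => - γ i) * (R.T u γ ^ n * Z)) := (hZ.Tpow hγ hγ' n).h hγ'
  have hd := URep.Dom.h (u := u) (γ := γ) hg (URep.Good.one R v w) hg.dom_one x
  rw [mul_one] at hd
  refine hd ?_ hx
  rw [← mul_assoc, (URep.h_h_comm u _ _).eq, ← mul_assoc]
  change R.f v w (R.T u γ * R.T u γ ^ n * Z) x ≠ 0
  rwa [← pow_succ']

theorem URep.f_e_on (hγ : Admis (R.f v w 1) u γ)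
    (hγ' : Admis (R.f v w 1) u (fun i => - γ i)) {x : V}
    (hx : R.f v w (R.h u γ) x ≠ 0) : R.f v w (R.e u γ) x = R.f v w 1 x := by
  have h1 := URep.f_e_lim (R := R) (v := v) (w := w) (u := u) (γ := γ) (Z := 1) x
  rw [mul_one] at h1
  have hv : ∀ n, R.f v w (R.T u γ ^ n * 1) x = R.f v w 1 x := by
    intro n
    rcases ((URep.Good.one R v w).Tpow hγ hγ' n).val x with h | h
    · exfalso
      have hg : R.Good v w (R.h u γ) := by simpa using (URep.Good.one R v w).h hγ
      exact URep.Dom.Tpow hg (URep.Good.one R v w) hγ hγ' hg.dom_one n x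
        (URep.claim1 hγ hγ' hx n) h
    · exact h
  exact tendsto_nhds_unique h1 (cesaro_const _ _ _ (fun n => hv _) (hv 0))

theorem URep.e_good (hγ : Admis (R.f v w 1) u γ)
    (hγ' : Admis (R.f v w 1) u (fun i => - γ i)) : R.Good v w (R.e u γ) := by
  refine ⟨URep.comm_e, fun x => ?_⟩
  by_cases hx : R.f v w (R.h u γ) x = 0
  · left
    have := URep.f_e_off hγ hγ' (URep.Good.one R v w) hx
    rwa [mul_one] at this
  · right
    exact URep.f_e_on hγ hγ' hx

theorem URep.f_h_ne_iff (hγ : Admis (R.f v w 1) u γ) {c : ℝ} (hc : 0 < c)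
    (hm : ∀ x, R.f v w 1 x = 0 ∨ c ≤ ‖R.f v w 1 x‖) (x : V) :
    R.f v w (R.h u γ) x ≠ 0 ↔ ∀ᶠ i in (u : Filter ℕ), R.f v w 1 (x + γ i) ≠ 0 := by
  have hl := R.f_h v w u γ R.comm_one x
  rw [mul_one] at hl
  constructor
  · intro h
    exact hl.eventually_ne h
  · intro h h0
    rw [h0] at hl
    have h2 := hl.norm
    rw [norm_zero] at h2
    obtain ⟨i, hi1, hi2⟩ := (h.and (h2.eventually (gt_mem_nhds hc))).exists
    rcases hm (x + γ i) with h3 | h3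
    · exact hi1 h3
    · exact absurd hi2 (not_lt.2 h3)

theorem URep.periods (hγ : Admis (R.f v w 1) u γ)
    (hγ' : Admis (R.f v w 1) u (fun i => - γ i)) {c : ℝ} (hc : 0 < c)
    (hm : ∀ x, R.f v w 1 x = 0 ∨ c ≤ ‖R.f v w 1 x‖) :
    ∃ I ∈ u, ∀ i ∈ I, ∀ j ∈ I, ∀ x,
      (R.f v w (R.h u γ) (x + γ i) ≠ 0 ↔ R.f v w (R.h u γ) (x + γ j) ≠ 0) := by
  set ev := R.e u γ v with hev
  have hnorm : ‖R.h u γ ev‖ ^ 2 = ‖ev‖ ^ 2 := by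
    have := URep.T_inner (R := R) (u := u) (γ := γ) ev ev
    rw [hev, URep.T_e, ← hev, inner_self_eq_norm_sq_to_K, inner_self_eq_norm_sq_to_K] at this
    exact_mod_cast this.symm
  have hlim : Tendsto (fun i => ‖R.U (γ i) ev - R.h u γ ev‖ ^ 2) u (𝓝 0) := by
    have h1 := (R.h_lim u γ (R.h u γ ev) ev)
    have h2 := (Complex.continuous_re.tendsto _).comp h1
    have h3 := ((h2.const_mul 2).const_sub (‖ev‖ ^ 2)).add_const (‖R.h u γ ev‖ ^ 2)
    have h4 : ‖ev‖ ^ 2 - 2 * (inner ℂ (R.h u γ ev) (R.h u γ ev) : ℂ).re + ‖R.h u γ ev‖ ^ 2 = 0 := by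
      have h5 := inner_self_eq_norm_sq (𝕜 := ℂ) (R.h u γ ev)
      rw [RCLike.re_to_complex] at h5
      rw [h5, ← hnorm]; ring
    rw [h4] at h3
    refine h3.congr fun i => ?_
    rw [@norm_sub_sq ℂ, R.norm, inner_re_symm]
    simp
  have hd : 0 < c / (2 * (‖w‖ + 1)) := by positivity
  have hev1 : ∀ᶠ i in (u : Filter ℕ), ‖R.U (γ i) ev - R.h u γ ev‖ ^ 2 < (c / (2 * (‖w‖ + 1))) ^ 2 :=
    hlim.eventually (gt_mem_nhds (by positivity))
  refine ⟨_, hev1, ?_⟩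
  have hval : ∀ x i, R.f v w (R.e u γ) (x + γ i) = inner ℂ (R.U (-x) w) (R.U (γ i) ev) := by
    intro x i
    rw [R.adj, neg_neg]
    unfold URep.f
    rw [R.add, hev, ← mul_apply_eq_comp, ← mul_apply_eq_comp, ← mul_apply_eq_comp, ← mul_assoc,
      (URep.comm_e x).eq, mul_assoc, (URep.comm_e (γ i)).eq, mul_assoc]
  have hfe : ∀ x, (R.f v w (R.h u γ) x ≠ 0 ∧ R.f v w (R.e u γ) x = R.f v w 1 x ∧ c ≤ ‖R.f v w 1 x‖) ∨
      (R.f v w (R.h u γ) x = 0 ∧ R.f v w (R.e u γ) x = 0) := by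
    intro x
    by_cases hx : R.f v w (R.h u γ) x = 0
    · right
      have := URep.f_e_off hγ hγ' (URep.Good.one R v w) hx
      rw [mul_one] at this
      exact ⟨hx, this⟩
    · left
      refine ⟨hx, URep.f_e_on hγ hγ' hx, ?_⟩
      rcases hm x with h | h
      · exfalso
        have hg : R.Good v w (R.h u γ) := by simpa using (URep.Good.one R v w).h hγ
        exact hg.dom_one x hx h
      · exact h
  have main : ∀ i, ‖R.U (γ i) ev - R.h u γ ev‖ ^ 2 < (c / (2 * (‖w‖ + 1))) ^ 2 →
      ∀ j, ‖R.U (γ j) ev - R.h u γ ev‖ ^ 2 < (c / (2 * (‖w‖ + 1))) ^ 2 → ∀ x,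
      R.f v w (R.h u γ) (x + γ i) ≠ 0 → R.f v w (R.h u γ) (x + γ j) ≠ 0 := by
    intro i hi j hj x hx1 hx2
    rcases hfe (x + γ i) with h1 | h1
    swap
    · exact hx1 h1.1
    rcases hfe (x + γ j) with h2 | h2
    · exact h2.1 hx2
    have hi' := lt_of_pow_lt_pow_left₀ 2 hd.le hi
    have hj' := lt_of_pow_lt_pow_left₀ 2 hd.le hj
    have e1 : R.f v w (R.e u γ) (x + γ i) = inner ℂ (R.U (-x) w)
        ((R.U (γ i) ev - R.h u γ ev) - (R.U (γ j) ev - R.h u γ ev)) := by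
      rw [sub_sub_sub_cancel_right, inner_sub_right, ← hval, ← hval, h2.2, sub_zero]
    have e2 : c ≤ ‖R.f v w (R.e u γ) (x + γ i)‖ := by rw [h1.2.1]; exact h1.2.2
    rw [e1] at e2
    have e3 := e2.trans (norm_inner_le_norm _ _)
    rw [R.norm] at e3
    have e4 : ‖(R.U (γ i) ev - R.h u γ ev) - (R.U (γ j) ev - R.h u γ ev)‖ ≤ c / (‖w‖ + 1) := by
      refine (norm_sub_le _ _).trans ((add_le_add hi'.le hj'.le).trans_eq ?_)
      field_simp; norm_num
    have e5 : c ≤ ‖w‖ * (c / (‖w‖ + 1)) := e3.trans (by gcongr)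
    have e6 : ‖w‖ * (c / (‖w‖ + 1)) < c := by
      rw [mul_div_assoc', div_lt_iff₀ (by positivity)]
      nlinarith [norm_nonneg w]
    exact absurd e5 (not_le.2 e6)
  intro i hi j hj x
  exact ⟨main i hi j hj x, main j hj i hi x⟩

/-- Counting classes. -/
theorem URep.count {c : ℝ} (hc : 0 < c) (γ : ℕ → ℕ → V)
    (hγ : ∀ n, Admis (R.f v w 1) u (γ n))
    (hγ' : ∀ n, Admis (R.f v w 1) u (fun i => - γ n i)) (l : ℕ → V)
    (N : ℕ) (hl : ∀ n < N, R.f v w (R.h u (γ n)) (l n) ≠ 0) (hlc : ∀ n < N, c ≤ ‖R.f v w 1 (l n)‖)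
    (hdis : ∀ n < N, ∀ k < N, n ≠ k → ∀ x, R.f v w (R.h u (γ n)) x = 0 ∨ R.f v w (R.h u (γ k)) x = 0) :
    N * c ^ 2 ≤ ‖w‖ ^ 2 * ‖v‖ ^ 2 := by
  let Q : ℕ → H →L[ℂ] H := fun n => Nat.rec 1 (fun j q => (1 - R.e u (γ j)) * q) n
  have hQ0 : Q 0 = 1 := rfl
  have hQs : ∀ n, Q (n + 1) = (1 - R.e u (γ n)) * Q n := fun n => rfl
  have hQc : ∀ n, R.Comm (Q n) := by
    intro n
    induction n with
    | zero => exact R.comm_one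
    | succ n ih =>
      rw [hQs]
      exact R.comm_mul (fun x => (Commute.one_left _).sub_left (URep.comm_e x)) ih
  have hQz : ∀ n, ∀ B, R.Comm B → (∀ x, R.f v w B x = 0) → ∀ x, R.f v w (Q n * B) x = 0 := by
    intro n
    induction n with
    | zero => intro B _ h0; simpa [hQ0] using h0
    | succ n ih =>
      intro B hB h0 x
      have e1 : Q (n + 1) * B = Q n * B - R.e u (γ n) * (Q n * B) := by
        rw [hQs, sub_mul, sub_mul, one_mul, mul_assoc]
      have e2 := ih B hB h0
      have e3 := URep.f_e_zero (u := u) (γ := γ n) (R.comm_mul (hQc n) hB) e2 x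
      have e4 : R.f v w (Q (n + 1) * B) x = R.f v w (Q n * B) x - R.f v w (R.e u (γ n) * (Q n * B)) x := by
        rw [e1]; simp [URep.f, inner_sub_right]
      rw [e4, e2, e3, sub_zero]
  have hee : ∀ n < N, ∀ k < N, n ≠ k → ∀ x, R.f v w (R.e u (γ n) * R.e u (γ k)) x = 0 := by
    intro n hn k hk hnk x
    rcases hdis n hn k hk hnk x with h | h
    · exact URep.f_e_off (hγ n) (hγ' n) (URep.e_good (hγ k) (hγ' k)) h
    · rw [(URep.e_commute (URep.comm_e)).eq]
      exact URep.f_e_off (hγ k) (hγ' k) (URep.e_good (hγ n) (hγ' n)) h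
  have hfQ : ∀ n < N, ∀ j ≤ n, R.f v w (R.e u (γ n) * Q j) (l n) = R.f v w 1 (l n) := by
    intro n hn j hj
    induction j with
    | zero =>
      rw [hQ0, mul_one]
      exact URep.f_e_on (hγ n) (hγ' n) (hl n hn)
    | succ j ih =>
      have e1 : R.e u (γ n) * Q (j + 1) = R.e u (γ n) * Q j - Q j * (R.e u (γ n) * R.e u (γ j)) := by
        rw [hQs, sub_mul, mul_sub, one_mul]
        congr 1
        have hcm := (URep.e_commute (R := R) (u := u) (γ := γ n) (hQc j)).mul_right
          (URep.e_commute (R := R) (u := u) (γ := γ j) (hQc j))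
        rw [hcm.eq, mul_assoc]
      have e2 := hQz j _ (R.comm_mul URep.comm_e URep.comm_e)
        (hee n hn j (by omega) (by omega)) (l n)
      have e4 : R.f v w (R.e u (γ n) * Q (j+1)) (l n) = R.f v w (R.e u (γ n) * Q j) (l n)
          - R.f v w (Q j * (R.e u (γ n) * R.e u (γ j))) (l n) := by
        rw [e1]; simp [URep.f, inner_sub_right]
      rw [e4, e2, sub_zero, ih (by omega)]
  have hlow : ∀ n < N, c ^ 2 ≤ ‖w‖ ^ 2 * ‖R.e u (γ n) (Q n v)‖ ^ 2 := by
    intro n hn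
    have h1 := hlc n hn
    rw [← hfQ n hn n le_rfl] at h1
    have h2 : R.f v w (R.e u (γ n) * Q n) (l n) = inner ℂ (R.U (- l n) w) (R.e u (γ n) (Q n v)) := by
      rw [R.adj, neg_neg]
      unfold URep.f
      have hcm := R.comm_mul (URep.comm_e (u := u) (γ := γ n)) (hQc n) (l n)
      rw [← mul_apply_eq_comp, hcm.eq]
      rfl
    rw [h2] at h1
    have h3 := h1.trans (norm_inner_le_norm _ _)
    rw [R.norm] at h3
    rw [← mul_pow]
    gcongr
  have hstep : ∀ n, ‖Q (n + 1) v‖ ^ 2 = ‖Q n v‖ ^ 2 - ‖R.e u (γ n) (Q n v)‖ ^ 2 := by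
    intro n
    have e1 : Q (n + 1) v = Q n v - R.e u (γ n) (Q n v) := by rw [hQs]; rfl
    have e2 : (inner ℂ (Q n v) (R.e u (γ n) (Q n v)) : ℂ) = ((‖R.e u (γ n) (Q n v)‖ ^ 2 : ℝ) : ℂ) := by
      have := URep.e_symm (R := R) (u := u) (γ := γ n) (Q n v) (R.e u (γ n) (Q n v))
      rw [← mul_apply_eq_comp (R.e u (γ n)) (R.e u (γ n)), URep.e_idem] at this
      rw [← this, inner_self_eq_norm_sq_to_K]
      push_cast; rfl
    rw [e1, @norm_sub_sq ℂ, e2]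
    simp only [RCLike.re_to_complex, Complex.ofReal_re]
    ring
  have hfin : ∀ n ≤ N, n * c ^ 2 + ‖w‖ ^ 2 * ‖Q n v‖ ^ 2 ≤ ‖w‖ ^ 2 * ‖v‖ ^ 2 := by
    intro n hn
    induction n with
    | zero => simp [hQ0]
    | succ n ih =>
      have h1 := ih (by omega)
      have h2 := hlow n (by omega)
      rw [hstep]
      push_cast
      nlinarith
  have := hfin N le_rfl
  nlinarith [mul_nonneg (sq_nonneg ‖w‖) (sq_nonneg ‖Q N v‖)]

end ops4


section gns
open scoped ComplexOrder BoundedContinuousFunction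

theorem exists_rep {Ω : Type} {V : Type*} [AddCommGroup V] (χ : Ω → V → ℂ)
    (h0 : ∀ ω, χ ω 0 = 1) (hadd : ∀ ω x y, χ ω (x + y) = χ ω x * χ ω y)
    (hconj : ∀ ω x, (starRingEnd ℂ) (χ ω x) = χ ω (-x)) (hn : ∀ ω x, ‖χ ω x‖ = 1)
    (a : ℕ → Ω → ℂ) (K : ℝ) (ha : ∀ n, Summable fun ω => ‖a n ω‖) (hK : ∀ n, ∑' ω, ‖a n ω‖ ≤ K)
    (m : V → ℂ) (hm : ∀ x, Tendsto (fun n => ∑' ω, a n ω * χ ω x) atTop (𝓝 (m x))) :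
    ∃ (H : Type) (_ : NormedAddCommGroup H) (_ : InnerProductSpace ℂ H) (_ : CompleteSpace H)
      (R : URep V H) (v w : H), ∀ x, R.f v w 1 x = m x := by
  let X := Ω × ℕ
  letI : TopologicalSpace X := ⊥
  haveI : DiscreteTopology X := ⟨rfl⟩
  let A := X →ᵇ ℂ
  letI : PartialOrder A := CStarAlgebra.spectralOrder A
  haveI : StarOrderedRing A := CStarAlgebra.spectralOrderedRing A
  have Aadd : ∀ (F G : A) (p : X), (F + G) p = F p + G p := fun _ _ _ => rfl
  have Amul : ∀ (F G : A) (p : X), (F * G) p = F p * G p := fun _ _ _ => rfl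
  have Asmul : ∀ (r : ℂ) (F : A) (p : X), (r • F) p = r * F p := fun _ _ _ => rfl
  have Astar : ∀ (F : A) (p : X), (star F) p = (starRingEnd ℂ) (F p) := fun _ _ => rfl
  let u : Ultrafilter ℕ := Filter.hyperfilter ℕ
  have hu : (u : Filter ℕ) ≤ atTop := by
    rw [← Nat.cofinite_eq_atTop]; exact Filter.hyperfilter_le_cofinite
  have hsum : ∀ (F : A) n, Summable fun ω => (‖a n ω‖ : ℂ) * F (ω, n) := by
    intro F n
    refine Summable.of_norm_bounded ((ha n).mul_right ‖F‖) fun ω => ?_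
    rw [norm_mul, Complex.norm_real, norm_norm]
    gcongr
    exact F.norm_coe_le_norm _
  have hex : ∀ F : A, ∃ z : ℂ, Tendsto (fun n => ∑' ω, (‖a n ω‖ : ℂ) * F (ω, n)) u (𝓝 z) := by
    intro F
    have hc : IsCompact (Metric.closedBall (0:ℂ) (K * ‖F‖)) := isCompact_closedBall _ _
    have := hc.ultrafilter_le_nhds (u.map (fun n => ∑' ω, (‖a n ω‖ : ℂ) * F (ω, n))) (by
      rw [le_principal_iff]
      refine Filter.mem_map.2 (Filter.Eventually.of_forall fun n => ?_)
      simp only [Metric.mem_closedBall, dist_zero_right]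
      have h1 : ‖∑' ω, (‖a n ω‖ : ℂ) * F (ω, n)‖ ≤ ∑' ω, ‖a n ω‖ * ‖F‖ := by
        refine tsum_of_norm_bounded ((ha n).mul_right ‖F‖).hasSum fun ω => ?_
        rw [norm_mul, Complex.norm_real, norm_norm]
        gcongr
        exact F.norm_coe_le_norm _
      refine h1.trans ?_
      rw [tsum_mul_right]
      gcongr
      exact hK n)
    obtain ⟨z, hz, hz'⟩ := this
    exact ⟨z, hz'⟩
  choose ρ hρ using hex
  let ρl : A →ₗ[ℂ] ℂ :=
    { toFun := ρ
      map_add' := fun F G => by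
        refine tendsto_nhds_unique (hρ (F + G)) (((hρ F).add (hρ G)).congr fun n => ?_)
        rw [← (hsum F n).tsum_add (hsum G n)]
        refine tsum_congr fun ω => ?_
        rw [Aadd, mul_add]
      map_smul' := fun r F => by
        refine tendsto_nhds_unique (hρ (r • F)) (((hρ F).const_mul r).congr fun n => ?_)
        rw [← tsum_mul_left]
        refine tsum_congr fun ω => ?_
        rw [Asmul]; ring }
  have hpos : ∀ F : A, 0 ≤ F → 0 ≤ ρl F := by
    intro F hF
    obtain ⟨y, rfl⟩ := CStarAlgebra.nonneg_iff_eq_star_mul_self.1 hF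
    refine ge_of_tendsto' (hρ _) fun n => ?_
    refine tsum_nonneg fun ω => ?_
    have : (star y * y) (ω, n) = ((‖y (ω, n)‖ ^ 2 : ℝ) : ℂ) := by
      rw [Amul, Astar, mul_comm, Complex.mul_conj, Complex.normSq_eq_norm_sq]
    rw [this, ← Complex.ofReal_mul]
    exact_mod_cast (by positivity)
  let f : A →ₚ[ℂ] ℂ := PositiveLinearMap.mk₀ ρl hpos
  let π := f.gnsStarAlgHom
  let ee : V → A := fun x => BoundedContinuousFunction.ofNormedAddCommGroup
    (fun p : X => χ p.1 x) continuous_of_discreteTopology 1 (fun p => (hn _ _).le)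
  let ph : A := BoundedContinuousFunction.ofNormedAddCommGroup
    (fun p : X => (starRingEnd ℂ) (a p.2 p.1 / ‖a p.2 p.1‖)) continuous_of_discreteTopology 1 (fun p => by
      rw [RCLike.norm_conj, norm_div, Complex.norm_real, norm_norm]
      exact div_self_le_one _)
  have hee : ∀ x p, ee x p = χ p.1 x := fun _ _ => rfl
  have hph : ∀ p, ph p = (starRingEnd ℂ) (a p.2 p.1 / ‖a p.2 p.1‖) := fun _ => rfl
  have hee0 : ee 0 = 1 := by ext p; simp [ee, h0]
  have heeadd : ∀ x y, ee (x + y) = ee x * ee y := by intro x y; ext p; rw [Amul, hee, hee, hee, hadd]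
  have heestar : ∀ x, star (ee x) = ee (-x) := by intro x; ext p; rw [Astar, hee, hee, hconj]
  let v : f.GNS := ((f.toPreGNS 1 : f.PreGNS) : f.GNS)
  let w : f.GNS := π ph v
  refine ⟨f.GNS, inferInstance, inferInstance, inferInstance, 
    { U := fun x => π (ee x)
      zero := by rw [hee0, map_one]
      add := fun x y => by rw [heeadd, map_mul]
      adj := fun x a b => by
        rw [← heestar, map_star, ContinuousLinearMap.star_eq_adjoint,
          ContinuousLinearMap.adjoint_inner_right] }, v, w, fun x => ?_⟩
  have key : (inner ℂ w (π (ee x) v) : ℂ) = ρ (star ph * ee x) := by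
    have h1 : ∀ F : A, π F v = ((f.toPreGNS F : f.PreGNS) : f.GNS) := by
      intro F
      have := f.gnsNonUnitalStarAlgHom_apply_coe (a := F) (b := f.toPreGNS 1)
      refine this.trans ?_
      congr 1
      exact congrArg f.toPreGNS (mul_one F)
    change (inner ℂ (π ph v) (π (ee x) v) : ℂ) = ρ (star ph * ee x)
    rw [h1, h1, UniformSpace.Completion.inner_coe, PositiveLinearMap.preGNS_inner_def]
    rfl
  change (inner ℂ w (π (ee x) v) : ℂ) = m x
  rw [key]
  refine tendsto_nhds_unique (hρ _) (((hm x).mono_left hu).congr fun n => ?_)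
  refine tsum_congr fun ω => ?_
  rw [Amul, Astar, hee, hph, Complex.conj_conj]
  rw [← mul_assoc]
  congr 1
  by_cases hz : a n ω = 0
  · simp [hz]
  · have : (‖a n ω‖ : ℂ) ≠ 0 := by exact_mod_cast norm_ne_zero_iff.2 hz
    field_simp

end gns


section geom

theorem finite_of_sep {V : Type*} [SeminormedAddCommGroup V] [ProperSpace V] {s : Set V} {β : ℝ} (hβ : 0 < β)
    (hb : IsBounded s) (hs : ∀ x ∈ s, ∀ y ∈ s, x ≠ y → β ≤ ‖x - y‖) : s.Finite := by
  have htb : TotallyBounded s := hb.isCompact_closure.totallyBounded.subset subset_closure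
  obtain ⟨t, ht, hst⟩ := Metric.totallyBounded_iff.1 htb (β / 2) (by positivity)
  have hex : ∀ x ∈ s, ∃ y ∈ t, dist x y < β / 2 := by
    intro x hx
    simpa using hst hx
  choose! f hft hfd using hex
  refine Set.Finite.of_injOn (f := f) (fun x hx => hft x hx) ?_ ht
  intro x hx y hy hxy
  by_contra hne
  have h1 := hs x hx y hy hne
  rw [← dist_eq_norm] at h1
  have h2 := dist_triangle_right x y (f x)
  have h3 := hfd x hx
  have h4 := hfd y hy
  rw [← hxy] at h4
  linarith

theorem exists_T_of_span {S : Set (Ed d)} (hS : Submodule.span ℝ S = ⊤) :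
    ∃ T : Ed d ≃ₗ[ℝ] Ed d, ∀ i, T (EuclideanSpace.single i 1) ∈ S := by
  obtain ⟨b, hbS, hsp, hli⟩ := exists_linearIndependent ℝ S
  rw [hS] at hsp
  let B : Module.Basis b ℝ (Ed d) := Module.Basis.mk hli (by rw [Subtype.range_coe, hsp])
  haveI : Fintype b := FiniteDimensional.fintypeBasisIndex B
  have hcard : Fintype.card b = d := by
    have h1 := Module.finrank_eq_card_basis B
    rw [finrank_euclideanSpace, Fintype.card_fin] at h1
    exact h1.symm
  let e : Fin d ≃ b := (Fintype.equivFinOfCardEq hcard).symm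
  let E := (EuclideanSpace.basisFun (Fin d) ℝ).toBasis
  refine ⟨E.equiv B e, fun i => ?_⟩
  have h1 : E i = EuclideanSpace.single i 1 := by simp [E]
  rw [← h1, Module.Basis.equiv_apply]
  have h2 : B (e i) = (e i : Ed d) := by simp [B]
  rw [h2]
  exact hbS (e i).2

/-- integer vectors -/
def intv (m : Fin d → ℤ) : Ed d := (WithLp.equiv 2 (Fin d → ℝ)).symm fun i => (m i : ℝ)

theorem mem_latt (T : Ed d ≃ₗ[ℝ] Ed d) (l x : Ed d) : x ∈ latt T l ↔ ∃ m : Fin d → ℤ, x = T (intv m) + l :=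
  Iff.rfl

theorem intv_apply (m : Fin d → ℤ) (i : Fin d) : (intv m) i = (m i : ℝ) := rfl

theorem intv_add (m n : Fin d → ℤ) : intv (m + n) = intv m + intv n := by
  ext i; simp [intv_apply]

theorem intv_neg (m : Fin d → ℤ) : intv (-m) = - intv m := by
  ext i; simp [intv_apply]

theorem intv_sub (m n : Fin d → ℤ) : intv (m - n) = intv m - intv n := by
  ext i; simp [intv_apply]

/-- If the `T e_i` are periods of `A`, then so are all lattice vectors. -/
theorem period_latt {A : Set (Ed d)} (T : Ed d ≃ₗ[ℝ] Ed d)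
    (hT : ∀ i x, x + T (EuclideanSpace.single i 1) ∈ A ↔ x ∈ A) (m : Fin d → ℤ) (x : Ed d) :
    T (intv m) + x ∈ A ↔ x ∈ A := by
  let G : AddSubgroup (Ed d) :=
    { carrier := {p | ∀ x, x + p ∈ A ↔ x ∈ A}
      zero_mem' := by intro x; simp
      add_mem' := by
        intro p q hp hq x
        rw [← add_assoc, hq, hp]
      neg_mem' := by
        intro p hp x
        rw [← hp (x + -p), neg_add_cancel_right] }
  have h1 : T (intv m) ∈ G := by
    have : intv m = ∑ i, (m i) • (EuclideanSpace.single i (1:ℝ) : Ed d) := by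
      ext j
      rw [intv_apply]
      simp [Finset.sum_apply, Pi.single_apply]
    rw [this, map_sum]
    refine G.sum_mem fun i _ => ?_
    rw [map_zsmul]
    exact G.zsmul_mem (hT i) _
  rw [add_comm]
  exact h1 x

/-- floor part -/
def flr (T : Ed d ≃ₗ[ℝ] Ed d) (x : Ed d) : Fin d → ℤ := fun i => ⌊T.symm x i⌋

/-- fundamental domain -/
def fdom (T : Ed d ≃ₗ[ℝ] Ed d) : Set (Ed d) := {x | ∀ i, 0 ≤ T.symm x i ∧ T.symm x i < 1}

theorem sub_flr_mem (T : Ed d ≃ₗ[ℝ] Ed d) (x : Ed d) : x - T (intv (flr T x)) ∈ fdom T := by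
  intro i
  rw [map_sub, LinearEquiv.symm_apply_apply]
  have : (T.symm x - intv (flr T x)) i = Int.fract (T.symm x i) := by
    rw [PiLp.sub_apply, intv_apply]
    rfl
  rw [this]
  exact ⟨Int.fract_nonneg _, Int.fract_lt_one _⟩

theorem fdom_bounded (T : Ed d ≃ₗ[ℝ] Ed d) : IsBounded (fdom T) := by
  have h1 : IsBounded {y : Ed d | ∀ i, 0 ≤ y i ∧ y i < 1} := by
    refine isBounded_iff_forall_norm_le.2 ⟨Real.sqrt d, fun y hy => ?_⟩
    rw [EuclideanSpace.norm_eq]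
    apply Real.sqrt_le_sqrt
    calc ∑ i, ‖y i‖ ^ 2 ≤ ∑ i : Fin d, (1:ℝ) := by
          refine Finset.sum_le_sum fun i _ => ?_
          rw [Real.norm_eq_abs, sq_abs]
          have := hy i
          nlinarith
      _ = d := by simp
  have h2 := (T.toContinuousLinearEquiv : Ed d →L[ℝ] Ed d).lipschitz.isBounded_image h1
  refine h2.subset fun x hx => ⟨T.symm x, hx, ?_⟩
  simp

theorem latt_disjoint (T : Ed d ≃ₗ[ℝ] Ed d) {a b : Ed d} (ha : a ∈ fdom T) (hb : b ∈ fdom T)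
    {x : Ed d} (hxa : x ∈ latt T a) (hxb : x ∈ latt T b) : a = b := by
  obtain ⟨m, hm⟩ := (mem_latt _ _ _).1 hxa
  obtain ⟨n, hn⟩ := (mem_latt _ _ _).1 hxb
  have h1 : T.symm a = T.symm b + intv (n - m) := by
    have : a = b + T (intv (n - m)) := by
      rw [intv_sub, map_sub]
      have := hm.symm.trans hn
      rw [add_comm, ← sub_eq_iff_eq_add] at this
      rw [← this]
      abel
    rw [this, map_add, LinearEquiv.symm_apply_apply]
  have h2 : n - m = 0 := by
    funext i
    have h3 : T.symm a i = T.symm b i + ((n - m) i : ℤ) := by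
      rw [h1]; rfl
    have h4 := ha i
    have h5 := hb i
    have h6 : ((n - m) i : ℝ) < 1 := by linarith
    have h7 : (-1:ℝ) < ((n - m) i : ℝ) := by linarith
    have h8 : (n - m) i < 1 := by exact_mod_cast h6
    have h9 : -1 < (n - m) i := by exact_mod_cast h7
    simp only [Pi.zero_apply]
    omega
  rw [h2] at h1
  have h3 : intv (0 : Fin d → ℤ) = 0 := by ext i; simp [intv_apply]
  rw [h3, add_zero] at h1
  exact T.symm.injective h1

end geom


section struct

/-- recurrence of a mass function along a sequence -/
def Recur (m : Ed d → ℂ) (τ : ℕ → Ed d) : Prop :=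
  (∀ x, m x ≠ 0 → ∀ ε > 0, ∀ᶠ k in atTop, ∃ y, ‖y - (x + τ k)‖ < ε ∧ ‖m y - m x‖ < ε) ∧
  (∀ x, m x = 0 → ∃ ε > 0, ∀ᶠ k in atTop, ∀ y, ‖y - (x + τ k)‖ < ε → m y = 0)

theorem admis_of_recur {m : Ed d → ℂ} {c β : ℝ} (hc : 0 < c) (hβ : 0 < β)
    (hm : ∀ x, m x = 0 ∨ c ≤ ‖m x‖) (hsep : ∀ x y, m x ≠ 0 → m y ≠ 0 → x ≠ y → β ≤ ‖x - y‖)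
    {τ : ℕ → Ed d} (hτ : Recur m τ) {u : Ultrafilter ℕ} (hu : (u : Filter ℕ) ≤ atTop)
    {γ : ℕ → Ed d} (hγ : ∀ ε > 0, ∀ᶠ k in (u : Filter ℕ), ‖γ k - τ k‖ < ε) : Admis m u γ := by
  intro x
  by_cases hx : m x = 0
  · left
    obtain ⟨ε, hε, h⟩ := hτ.2 x hx
    filter_upwards [h.filter_mono hu, hγ ε hε] with k h1 h2
    exact h1 _ (by simpa using h2)
  · have hor : ∀ᶠ k in (u : Filter ℕ), m (x + γ k) = 0 ∨ m (x + γ k) ≠ 0 :=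
      Eventually.of_forall fun k => em _
    rcases Ultrafilter.eventually_or.1 hor with h0 | h1
    · exact Or.inl h0
    · right
      rw [Metric.tendsto_nhds]
      intro ε hε
      have hxc : c ≤ ‖m x‖ := (hm x).resolve_left hx
      have hmin : 0 < min ε (min c (β / 2)) := by positivity
      filter_upwards [h1, (hτ.1 x hx _ hmin).filter_mono hu, hγ (β / 2) (by positivity)] with k a b e
      obtain ⟨y, hy1, hy2⟩ := b
      have hy0 : m y ≠ 0 := by
        intro h
        rw [h, zero_sub, norm_neg] at hy2
        have := lt_of_lt_of_le hy2 ((min_le_right _ _).trans (min_le_left _ _))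
        linarith
      have hxy : x + γ k = y := by
        by_contra hne
        have h2 := hsep _ _ a hy0 hne
        have h3 : x + γ k - y = (γ k - τ k) - (y - (x + τ k)) := by abel
        rw [h3] at h2
        have h4 := norm_sub_le (γ k - τ k) (y - (x + τ k))
        have h5 := lt_of_lt_of_le hy1 ((min_le_right _ _).trans (min_le_right _ _))
        linarith
      rw [hxy, dist_eq_norm]
      exact lt_of_lt_of_le hy2 (min_le_left _ _)

theorem struct_main {m : Ed d → ℂ} {c β : ℝ} (hc : 0 < c) (hβ : 0 < β)
    (hm : ∀ x, m x = 0 ∨ c ≤ ‖m x‖) (hsep : ∀ x y, m x ≠ 0 → m y ≠ 0 → x ≠ y → β ≤ ‖x - y‖)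
    {H : Type} [NormedAddCommGroup H] [InnerProductSpace ℂ H] [CompleteSpace H]
    (R : URep (Ed d) H) (v w : H) (hR : ∀ x, R.f v w 1 x = m x)
    (τ : ℕ → Ed d) (hτ : Recur m τ) (hτ' : Recur m (fun k => - τ k))
    (hgen : ∀ l : Ed d, l ≠ 0 → Tendsto (fun k => |(inner ℝ l (τ k) : ℝ)|) atTop atTop) :
    ∃ (N : ℕ) (lam : Fin N → Ed d) (T : Fin N → (Ed d ≃ₗ[ℝ] Ed d)),
      (∀ j, m (lam j) ≠ 0) ∧ Function.support m = ⋃ j : Fin N, latt (T j) (lam j) ∧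
      (∀ i j, ∀ x, x ∈ latt (T i) (lam i) → x ∈ latt (T j) (lam j) → i = j) := by
  classical
  have hR1 : R.f v w 1 = m := funext hR
  let u : Ultrafilter ℕ := Filter.hyperfilter ℕ
  have hu : (u : Filter ℕ) ≤ atTop := by
    rw [← Nat.cofinite_eq_atTop]; exact Filter.hyperfilter_le_cofinite
  -- choice of approximating sequences
  have hex : ∀ l : Ed d, ∃ γ : ℕ → Ed d, m l ≠ 0 →
      (∀ ε > 0, ∀ᶠ k in (u : Filter ℕ), ‖γ k - τ k‖ < ε) ∧ ∀ᶠ k in (u : Filter ℕ), m (l + γ k) ≠ 0 := by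
    intro l
    by_cases hl : m l = 0
    · exact ⟨0, fun h => absurd hl h⟩
    have hlc : c ≤ ‖m l‖ := (hm l).resolve_left hl
    refine ⟨fun k => if h : ∃ y, ‖y - (l + τ k)‖ < β / 2 ∧ m y ≠ 0 then h.choose - l else 0,
      fun _ => ?_⟩
    have key : ∀ ε > 0, ∀ᶠ k in (u : Filter ℕ), ∃ y, ‖y - (l + τ k)‖ < ε ∧ m y ≠ 0 ∧
        (if h : ∃ y, ‖y - (l + τ k)‖ < β / 2 ∧ m y ≠ 0 then h.choose - l else 0) = y - l := by
      intro ε hε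
      have hmin : 0 < min ε (min c (β / 2)) := by positivity
      filter_upwards [(hτ.1 l hl _ hmin).filter_mono hu] with k ⟨y, hy1, hy2⟩
      have hy0 : m y ≠ 0 := by
        intro h
        rw [h, zero_sub, norm_neg] at hy2
        have := lt_of_lt_of_le hy2 ((min_le_right _ _).trans (min_le_left _ _))
        linarith
      have hy3 := lt_of_lt_of_le hy1 ((min_le_right _ _).trans (min_le_right _ _))
      have hh : ∃ y, ‖y - (l + τ k)‖ < β / 2 ∧ m y ≠ 0 := ⟨y, hy3, hy0⟩
      refine ⟨y, lt_of_lt_of_le hy1 (min_le_left _ _), hy0, ?_⟩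
      rw [dif_pos hh]
      congr 1
      by_contra hne
      have h2 := hsep _ _ hh.choose_spec.2 hy0 hne
      have h3 : hh.choose - y = (hh.choose - (l + τ k)) - (y - (l + τ k)) := by abel
      rw [h3] at h2
      have h4 := norm_sub_le (hh.choose - (l + τ k)) (y - (l + τ k))
      have h5 := hh.choose_spec.1
      linarith
    refine ⟨fun ε hε => ?_, ?_⟩
    · filter_upwards [key ε hε] with k ⟨y, hy1, hy2, hy3⟩
      rw [hy3]
      have : y - l - τ k = y - (l + τ k) := by abel
      rwa [this]
    · filter_upwards [key 1 one_pos] with k ⟨y, hy1, hy2, hy3⟩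
      rw [hy3]
      simpa using hy2
  choose γ hγ using hex
  have hadm : ∀ l, m l ≠ 0 → Admis (R.f v w 1) u (γ l) := by
    intro l hl
    rw [hR1]
    exact admis_of_recur hc hβ hm hsep hτ hu (hγ l hl).1
  have hadm' : ∀ l, m l ≠ 0 → Admis (R.f v w 1) u (fun i => - γ l i) := by
    intro l hl
    rw [hR1]
    refine admis_of_recur hc hβ hm hsep hτ' hu (fun ε hε => ?_)
    filter_upwards [(hγ l hl).1 ε hε] with k hk
    rwa [← norm_neg, neg_sub, sub_neg_eq_add, neg_add_eq_sub]
  let cl : Ed d → Set (Ed d) := fun l => {x | ∀ᶠ k in (u : Filter ℕ), m (x + γ l k) ≠ 0}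
  have hcl : ∀ l, m l ≠ 0 → ∀ x, x ∈ cl l ↔ R.f v w (R.h u (γ l)) x ≠ 0 := by
    intro l hl x
    rw [URep.f_h_ne_iff (hadm l hl) hc (by rw [hR1]; exact hm), hR1]
    rfl
  have hself : ∀ l, m l ≠ 0 → l ∈ cl l := fun l hl => (hγ l hl).2
  have hclm : ∀ l, m l ≠ 0 → ∀ x ∈ cl l, m x ≠ 0 := by
    intro l hl x hx hx0
    rcases hadm l hl x with h | h
    · rw [hR1] at h
      obtain ⟨k, h1, h2⟩ := (h.and hx).exists
      exact h2 h1
    · rw [hR1, hx0] at h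
      have h2 := h.norm
      rw [norm_zero] at h2
      obtain ⟨i, hi1, hi2⟩ := (Filter.Eventually.and hx (h2.eventually (gt_mem_nhds hc))).exists
      rcases hm (x + γ l i) with h3 | h3
      · exact hi1 h3
      · exact absurd hi2 (not_lt.2 h3)
  have hmeet : ∀ l, m l ≠ 0 → ∀ l', m l' ≠ 0 → ∀ x ∈ cl l, x ∈ cl l' → cl l = cl l' := by
    intro l hl l' hl' x hx hx'
    have heq : ∀ᶠ k in (u : Filter ℕ), γ l k = γ l' k := by
      filter_upwards [hx, hx', (hγ l hl).1 (β / 2) (by positivity), (hγ l' hl').1 (β / 2) (by positivity)]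
        with k h1 h2 h3 h4
      by_contra hne
      have h5 := hsep _ _ h1 h2 (by simpa using hne)
      have h6 : x + γ l k - (x + γ l' k) = (γ l k - τ k) - (γ l' k - τ k) := by abel
      rw [h6] at h5
      have h7 := norm_sub_le (γ l k - τ k) (γ l' k - τ k)
      linarith
    ext y
    refine Filter.eventually_congr ?_
    filter_upwards [heq] with k hk
    rw [hk]
  -- finitely many classes
  have hfin : (cl '' Function.support m).Finite := by
    by_contra hinf
    have hinf : (cl '' Function.support m).Infinite := hinf
    have hex2 : ∀ n : ℕ, ∃ l, m l ≠ 0 ∧ cl l = (hinf.natEmbedding _ n : Set (Ed d)) := by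
      intro n
      obtain ⟨l, hl, hl2⟩ := (hinf.natEmbedding _ n).2
      exact ⟨l, hl, hl2⟩
    choose l hl hl2 using hex2
    have hdis : ∀ n k, n ≠ k → ∀ x, R.f v w (R.h u (γ (l n))) x = 0 ∨ R.f v w (R.h u (γ (l k))) x = 0 := by
      intro n k hnk x
      by_contra hcon
      push Not at hcon
      have h1 := (hcl _ (hl n) x).2 hcon.1
      have h2 := (hcl _ (hl k) x).2 hcon.2
      have h3 := hmeet _ (hl n) _ (hl k) x h1 h2
      rw [hl2, hl2] at h3
      exact hnk ((hinf.natEmbedding _).injective (Subtype.ext h3))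
    obtain ⟨N, hN⟩ := exists_nat_gt ((‖w‖ ^ 2 * ‖v‖ ^ 2) / c ^ 2)
    have hcnt := URep.count (R := R) (v := v) (w := w) (u := u) hc (fun n => γ (l n))
      (fun n => hadm _ (hl n)) (fun n => hadm' _ (hl n)) l N
      (fun n _ => (hcl _ (hl n) _).1 (hself _ (hl n)))
      (fun n _ => by rw [hR1]; exact (hm _).resolve_left (hl n))
      (fun n _ k _ hnk => hdis n k hnk)
    rw [div_lt_iff₀ (by positivity)] at hN
    linarith
  -- lattices of periods
  have hper : ∀ A ∈ cl '' Function.support m, ∃ T : Ed d ≃ₗ[ℝ] Ed d,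
      ∀ i x, x + T (EuclideanSpace.single i 1) ∈ A ↔ x ∈ A := by
    rintro A ⟨l, hl, rfl⟩
    have hl : m l ≠ 0 := hl
    obtain ⟨I, hI, hIp⟩ := URep.periods (hadm l hl) (hadm' l hl) hc (by rw [hR1]; exact hm)
    have hspan : Submodule.span ℝ {p | ∃ i ∈ I, ∃ j ∈ I, p = γ l i - γ l j} = ⊤ := by
      by_contra hne
      rw [← Submodule.orthogonal_eq_bot_iff, Submodule.eq_bot_iff] at hne
      push Not at hne
      obtain ⟨z, hz, hz0⟩ := hne
      rw [Submodule.mem_orthogonal] at hz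
      obtain ⟨j, hj⟩ := Ultrafilter.nonempty_of_mem hI
      have h1 : ∀ i ∈ I, (inner ℝ z (γ l i) : ℝ) = inner ℝ z (γ l j) := by
        intro i hi
        have := hz (γ l i - γ l j) (Submodule.subset_span ⟨i, hi, j, hj, rfl⟩)
        rw [real_inner_comm, inner_sub_right] at this
        linarith
      have h2 := ((hgen z hz0).mono_left hu).eventually_gt_atTop (|(inner ℝ z (γ l j) : ℝ)| + ‖z‖)
      obtain ⟨i, ⟨hi1, hi2⟩, hi3⟩ := ((h2.and ((hγ l hl).1 1 one_pos)).and hI).exists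
      have h3 : (inner ℝ z (τ i) : ℝ) = inner ℝ z (γ l i) - inner ℝ z (γ l i - τ i) := by
        rw [inner_sub_right]; ring
      rw [h3, h1 i hi3] at hi1
      have h4 := abs_sub (inner ℝ z (γ l j) : ℝ) (inner ℝ z (γ l i - τ i))
      have h5 : |(inner ℝ z (γ l i - τ i) : ℝ)| ≤ ‖z‖ * 1 :=
        (abs_real_inner_le_norm _ _).trans (by gcongr)
      linarith
    obtain ⟨T, hT⟩ := exists_T_of_span hspan
    refine ⟨T, fun i x => ?_⟩
    obtain ⟨a, ha, b, hb, hab⟩ := hT i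
    rw [hab, hcl l hl, hcl l hl]
    have := hIp a ha b hb (x - γ l b)
    have e1 : x + (γ l a - γ l b) = x - γ l b + γ l a := by abel
    rw [e1, this, sub_add_cancel]
  choose! T hT using hper
  let S : Set (Set (Ed d) × Ed d) := {p | p.1 ∈ cl '' Function.support m ∧ p.2 ∈ p.1 ∧ p.2 ∈ fdom (T p.1)}
  have hSfin : S.Finite := by
    have : S ⊆ ⋃ A ∈ cl '' Function.support m, (fun a => (A, a)) '' (A ∩ fdom (T A)) := by
      rintro ⟨A, a⟩ ⟨h1, h2, h3⟩
      simp only [Set.mem_iUnion]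
      exact ⟨A, h1, a, ⟨h2, h3⟩, rfl⟩
    refine (hfin.biUnion fun A hA => Set.Finite.image _ ?_).subset this
    refine finite_of_sep hβ ((fdom_bounded (T A)).subset Set.inter_subset_right) ?_
    obtain ⟨l, hl, rfl⟩ := hA
    intro x hx y hy hxy
    exact hsep x y (hclm l hl x hx.1) (hclm l hl y hy.1) hxy
  haveI : Finite S := hSfin
  obtain ⟨N, ⟨e⟩⟩ := Finite.exists_equiv_fin S
  refine ⟨N, fun j => (e.symm j).1.2, fun j => T (e.symm j).1.1, fun j => ?_, ?_, ?_⟩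
  · obtain ⟨⟨l, hl, hl2⟩, h2, h3⟩ := (e.symm j).2
    refine hclm l hl _ ?_
    rw [hl2]; exact h2
  · ext x
    simp only [Set.mem_iUnion]
    constructor
    · intro hx
      have hA : cl x ∈ cl '' Function.support m := ⟨x, hx, rfl⟩
      have hS : (cl x, x - T (cl x) (intv (flr (T (cl x)) x))) ∈ S := by
        refine ⟨hA, ?_, sub_flr_mem _ _⟩
        have := (period_latt (T (cl x)) (hT _ hA) (- flr (T (cl x)) x) x).2 (hself x hx)
        rwa [intv_neg, map_neg, neg_add_eq_sub] at this
      refine ⟨e ⟨_, hS⟩, ?_⟩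
      rw [Equiv.symm_apply_apply]
      exact ⟨flr (T (cl x)) x, by change x = T (cl x) (intv _) + _; simp⟩
    · rintro ⟨j, hj⟩
      obtain ⟨hA, h2, h3⟩ := (e.symm j).2
      obtain ⟨n, hn⟩ := (mem_latt _ _ _).1 hj
      have h4 := (period_latt (T _) (hT _ hA) n _).2 h2
      rw [← hn] at h4
      obtain ⟨l, hl, hl2⟩ := hA
      rw [← hl2] at h4
      exact hclm l hl x h4
  · intro i j x hi0 hj0
    have hi : x ∈ latt (T (e.symm i).1.1) (e.symm i).1.2 := hi0
    have hj : x ∈ latt (T (e.symm j).1.1) (e.symm j).1.2 := hj0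
    have hmem : ∀ j, x ∈ latt (T (e.symm j).1.1) (e.symm j).1.2 → x ∈ (e.symm j).1.1 := by
      intro j hj
      obtain ⟨hA, h2, h3⟩ := (e.symm j).2
      obtain ⟨n, hn⟩ := (mem_latt _ _ _).1 hj
      have h4 := (period_latt (T _) (hT _ hA) n _).2 h2
      rwa [← hn] at h4
    have hA : (e.symm i).1.1 = (e.symm j).1.1 := by
      have h1 := hmem i hi
      have h2 := hmem j hj
      obtain ⟨l, hl, hl2⟩ := (e.symm i).2.1
      obtain ⟨l', hl', hl2'⟩ := (e.symm j).2.1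
      rw [← hl2] at h1 ⊢
      rw [← hl2'] at h2 ⊢
      exact hmeet l hl l' hl' x h1 h2
    have hi3 := (e.symm i).2.2.2
    have hj3 := (e.symm j).2.2.2
    rw [hA] at hi hi3
    have hab := latt_disjoint _ hi3 hj3 hi hj
    exact e.symm.injective (Subtype.ext (Prod.ext hA hab))

end struct


section grow

/-- weight function -/
def wt (d : ℕ) (s : ℝ) : ℝ := ((1 + s) ^ (d + 1))⁻¹

lemma wt_pos (d : ℕ) {s : ℝ} (hs : 0 ≤ s) : 0 < wt d s := by unfold wt; positivity

lemma wt_le_tsum (d : ℕ) (s : ℝ) (hs : 0 ≤ s) :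
    ENNReal.ofReal (wt d s) ≤ ∑' j : ℕ, ENNReal.ofReal (2 ^ (d + 1) * ((2 ^ (d + 1))⁻¹) ^ j) *
      (Set.indicator {t : ℝ | t < 2 ^ j} 1 s) := by
  classical
  have hex : ∃ j : ℕ, s < 2 ^ j := pow_unbounded_of_one_lt s (by norm_num)
  set j := Nat.find hex with hj
  have h1 : s < 2 ^ j := Nat.find_spec hex
  refine le_trans ?_ (ENNReal.le_tsum j)
  rw [Set.indicator_of_mem (show s ∈ {t : ℝ | t < 2 ^ j} from h1)]
  simp only [Pi.one_apply, mul_one]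
  apply ENNReal.ofReal_le_ofReal
  unfold wt
  rcases Nat.eq_zero_or_pos j with h0 | h0
  · rw [h0]
    simp only [pow_zero, mul_one]
    calc ((1 + s) ^ (d + 1))⁻¹ ≤ 1 := inv_le_one_of_one_le₀ (one_le_pow₀ (by linarith))
      _ ≤ 2 ^ (d + 1) := one_le_pow₀ (by norm_num)
  · obtain ⟨i, hi⟩ : ∃ i, j = i + 1 := ⟨j - 1, by omega⟩
    have h2 : (2 : ℝ) ^ i ≤ s := by
      by_contra hcon
      push Not at hcon
      have := Nat.find_min' hex hcon
      omega
    have e1 : (2 : ℝ) ^ (d + 1) * ((2 ^ (d + 1))⁻¹) ^ (i + 1) = ((2 ^ i) ^ (d + 1))⁻¹ := by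
      rw [pow_succ ((2 ^ (d + 1))⁻¹ : ℝ) i, mul_comm, mul_assoc, inv_mul_cancel₀ (by positivity), mul_one,
        inv_pow, ← pow_mul, ← pow_mul, mul_comm]
    rw [hi, e1]
    gcongr
    linarith

lemma var_eq {V : Type*} (ν : PPM V) (A : Set V) :
    ν.var A = ∑' x, ‖ν.mass x‖ₑ * A.indicator 1 x := by
  classical
  unfold PPM.var
  rw [tsum_subtype A (fun x => ((‖ν.mass x‖₊ : ℝ≥0∞)))]
  apply tsum_congr
  intro x
  by_cases hx : x ∈ A <;> simp [hx, enorm]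

lemma grow_sum (ν : PPM (Ed d)) (C r0 : ℝ)
    (h : ∀ r ≥ r0, ν.var (ball 0 r) ≤ ENNReal.ofReal (C * r ^ d)) (r : ℝ) (hr : r0 ≤ r)
    (hr1 : 0 < r) :
    ∑' ω, ‖ν.mass ω‖ₑ * ENNReal.ofReal (wt d (‖ω‖ / r)) ≤
      ENNReal.ofReal (|C| * 2 ^ (d + 2) * r ^ d) := by
  calc ∑' ω, ‖ν.mass ω‖ₑ * ENNReal.ofReal (wt d (‖ω‖ / r))
      ≤ ∑' ω, ‖ν.mass ω‖ₑ * ∑' j : ℕ, ENNReal.ofReal (2 ^ (d + 1) * ((2 ^ (d + 1))⁻¹) ^ j) *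
      (Set.indicator {t : ℝ | t < 2 ^ j} 1 (‖ω‖ / r)) := by
        gcongr with ω
        exact wt_le_tsum d _ (by positivity)
    _ = ∑' j : ℕ, ENNReal.ofReal (2 ^ (d + 1) * ((2 ^ (d + 1))⁻¹) ^ j) * ν.var (ball 0 (2 ^ j * r)) := by
        simp_rw [← ENNReal.tsum_mul_left]
        rw [ENNReal.tsum_comm]
        apply tsum_congr
        intro j
        rw [var_eq, ← ENNReal.tsum_mul_left]
        apply tsum_congr
        intro ω
        have : Set.indicator {t : ℝ | t < 2 ^ j} (1 : ℝ → ℝ≥0∞) (‖ω‖ / r) =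
            Set.indicator (ball (0 : Ed d) (2 ^ j * r)) 1 ω := by
          classical
          simp only [Set.indicator_apply, Set.mem_setOf_eq, mem_ball_zero_iff, div_lt_iff₀ hr1,
            Pi.one_apply]
        rw [this]; ring
    _ ≤ ∑' j : ℕ, ENNReal.ofReal (|C| * 2 ^ (d + 1) * r ^ d * (1 / 2) ^ j) := by
        gcongr with j
        have h1 : r0 ≤ 2 ^ j * r := by
          have : (1 : ℝ) ≤ 2 ^ j := one_le_pow₀ (by norm_num)
          nlinarith
        refine (mul_le_mul_right (h _ h1) _).trans ?_
        rw [← ENNReal.ofReal_mul (by positivity)]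
        apply ENNReal.ofReal_le_ofReal
        have e1 : (2 : ℝ) ^ (d + 1) * ((2 ^ (d + 1))⁻¹) ^ j * (C * (2 ^ j * r) ^ d) =
            C * (2 ^ (d + 1) * r ^ d * (1 / 2) ^ j) := by
          have : ((2 : ℝ) ^ (d + 1))⁻¹ ^ j * (2 ^ j) ^ d = (1 / 2) ^ j := by
            rw [← inv_pow, ← pow_mul, ← pow_mul, inv_pow, one_div, inv_pow,
              show (d + 1) * j = j * d + j by ring, pow_add]
            field_simp
          rw [mul_pow, ← this]; ring
        rw [e1]
        have : C * (2 ^ (d + 1) * r ^ d * (1 / 2) ^ j) ≤ |C| * (2 ^ (d + 1) * r ^ d * (1 / 2) ^ j) := by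
          gcongr; exact le_abs_self C
        linarith
    _ = ENNReal.ofReal (|C| * 2 ^ (d + 2) * r ^ d) := by
        have hs : HasSum (fun j : ℕ => |C| * 2 ^ (d + 1) * r ^ d * (1 / 2 : ℝ) ^ j)
            (|C| * 2 ^ (d + 1) * r ^ d * 2) := hasSum_geometric_two.mul_left _
        rw [← ENNReal.ofReal_tsum_of_nonneg (fun j => by positivity) hs.summable, hs.tsum_eq]
        congr 1; ring

lemma summable_of_enorm {ι : Type*} {f : ι → ℂ} {K : ℝ≥0∞} (hK : K ≠ ⊤) (h : ∑' i, ‖f i‖ₑ ≤ K) :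
    Summable (fun i => ‖f i‖) ∧ ∑' i, ‖f i‖ ≤ K.toReal := by
  have h1 : ∑' i, ‖f i‖ₑ ≠ ⊤ := ne_top_of_le_ne_top hK h
  have h2 : Summable (fun i => ‖f i‖) := by
    have := ENNReal.summable_toReal h1
    simpa using this
  refine ⟨h2, ?_⟩
  have h3 : ∑' i, ‖f i‖ = (∑' i, ‖f i‖ₑ).toReal := by
    rw [ENNReal.tsum_toReal_eq (fun i => by simp)]
    simp
  rw [h3]
  exact ENNReal.toReal_mono hK h

lemma schwartz_wt (φ : SchwartzMap (Ed d) ℂ) : ∃ A : ℝ, 0 ≤ A ∧ ∀ x, ‖φ x‖ ≤ A * wt d ‖x‖ := by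
  have h := SchwartzMap.one_add_le_sup_seminorm_apply (𝕜 := ℝ) (m := (d + 1, 0)) (k := d + 1)
    (n := 0) le_rfl le_rfl φ
  refine ⟨2 ^ (d + 1) * ((Finset.Iic (d + 1, 0)).sup (fun m => SchwartzMap.seminorm ℝ m.1 m.2)) φ,
    by positivity, fun x => ?_⟩
  · have := h x
    rw [norm_iteratedFDeriv_zero] at this
    unfold wt
    rw [← div_eq_mul_inv, le_div_iff₀ (by positivity), mul_comm]
    exact this

/-- polynomially bounded measure -/
def PB (m : Ed d → ℂ) : Prop := Summable fun x => ‖m x‖ * wt d ‖x‖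

lemma PB.summ {m : Ed d → ℂ} (h : PB m) (φ : SchwartzMap (Ed d) ℂ) :
    Summable fun x => ‖m x * φ x‖ := by
  obtain ⟨A, hA, hφ⟩ := schwartz_wt φ
  refine Summable.of_nonneg_of_le (fun _ => norm_nonneg _) (fun x => ?_) (h.mul_left A)
  rw [norm_mul]
  calc ‖m x‖ * ‖φ x‖ ≤ ‖m x‖ * (A * wt d ‖x‖) := by gcongr; exact hφ x
    _ = _ := by ring

lemma grow_scaled (ν : PPM (Ed d))
    (hgrow : ∃ C : ℝ, ∀ᶠ r : ℝ in atTop, ν.var (ball 0 r) ≤ ENNReal.ofReal (C * r ^ d))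
    (φ : SchwartzMap (Ed d) ℂ) :
    PB ν.mass ∧ ∃ (n0 : ℕ) (K : ℝ), 0 < n0 ∧ ∀ n : ℕ, n0 ≤ n →
      Summable (fun ω => ‖ν.mass ω * (((n : ℂ) ^ d)⁻¹ * φ ((n : ℝ)⁻¹ • ω))‖) ∧
      ∑' ω, ‖ν.mass ω * (((n : ℂ) ^ d)⁻¹ * φ ((n : ℝ)⁻¹ • ω))‖ ≤ K := by
  obtain ⟨C, hC⟩ := hgrow
  obtain ⟨r0, hr0⟩ := eventually_atTop.1 hC
  constructor
  · set r := max r0 1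
    have hr1 : 1 ≤ r := le_max_right _ _
    have h := grow_sum ν C r0 hr0 r (le_max_left _ _) (by positivity)
    have h2 : ∑' ω, ‖(ν.mass ω * (wt d (‖ω‖ / r) : ℝ))‖ₑ ≤ ENNReal.ofReal (|C| * 2 ^ (d + 2) * r ^ d) := by
      refine le_trans (le_of_eq ?_) h
      apply tsum_congr
      intro ω
      rw [enorm_mul]
      congr 1
      rw [← ofReal_norm_eq_enorm, Complex.norm_real, Real.norm_of_nonneg (wt_pos d (by positivity)).le]
    have h3 := (summable_of_enorm ENNReal.ofReal_ne_top h2).1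
    refine Summable.of_nonneg_of_le (fun x => mul_nonneg (norm_nonneg _) (wt_pos d (norm_nonneg _)).le)
      (fun x => ?_) h3
    rw [norm_mul, Complex.norm_real, Real.norm_of_nonneg (wt_pos d (by positivity)).le]
    gcongr
    unfold wt
    gcongr
    exact div_le_self (norm_nonneg _) hr1
  · obtain ⟨A, hA, hφ⟩ := schwartz_wt φ
    obtain ⟨n1, hn1⟩ := exists_nat_ge r0
    refine ⟨n1 + 1, (ENNReal.ofReal (A * (|C| * 2 ^ (d + 2)))).toReal, by omega, fun n hn => ?_⟩
    apply summable_of_enorm ENNReal.ofReal_ne_top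
    have hn0 : (0 : ℝ) < n := by
      have : 0 < n := by omega
      exact_mod_cast this
    have hn2 : r0 ≤ n := hn1.trans (by exact_mod_cast (by omega : n1 ≤ n))
    have h := grow_sum ν C r0 hr0 n hn2 hn0
    calc ∑' ω, ‖ν.mass ω * (((n : ℂ) ^ d)⁻¹ * φ ((n : ℝ)⁻¹ • ω))‖ₑ
        ≤ ∑' ω, ENNReal.ofReal (((n : ℝ) ^ d)⁻¹ * A) * (‖ν.mass ω‖ₑ * ENNReal.ofReal (wt d (‖ω‖ / n))) := by
          gcongr with ω
          rw [enorm_mul, mul_left_comm]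
          gcongr
          rw [← ENNReal.ofReal_mul (by positivity), ← ofReal_norm_eq_enorm]
          apply ENNReal.ofReal_le_ofReal
          rw [norm_mul, norm_inv, norm_pow, Complex.norm_natCast, mul_assoc]
          gcongr
          refine (hφ _).trans (le_of_eq ?_)
          rw [norm_smul, norm_inv, Real.norm_of_nonneg hn0.le, div_eq_inv_mul]
      _ = ENNReal.ofReal (((n : ℝ) ^ d)⁻¹ * A) * ∑' ω, (‖ν.mass ω‖ₑ * ENNReal.ofReal (wt d (‖ω‖ / n))) :=
          ENNReal.tsum_mul_left
      _ ≤ ENNReal.ofReal (((n : ℝ) ^ d)⁻¹ * A) * ENNReal.ofReal (|C| * 2 ^ (d + 2) * n ^ d) := by gcongr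
      _ = ENNReal.ofReal (A * (|C| * 2 ^ (d + 2))) := by
          rw [← ENNReal.ofReal_mul (by positivity)]
          congr 1
          field_simp

end grow


section transl
open FourierTransform

/-- exponential -/
def ee (t : ℝ) : ℂ := Complex.exp (((2 * Real.pi * t : ℝ) : ℂ) * Complex.I)

lemma ee_norm (t : ℝ) : ‖ee t‖ = 1 := by unfold ee; exact Complex.norm_exp_ofReal_mul_I _

lemma ee_add (s t : ℝ) : ee (s + t) = ee s * ee t := by
  unfold ee; rw [← Complex.exp_add]; congr 1; push_cast; ring

lemma ee_zero : ee 0 = 1 := by simp [ee]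

lemma ee_neg (t : ℝ) : ee (-t) = (starRingEnd ℂ) (ee t) := by
  unfold ee
  rw [← Complex.exp_conj]
  congr 1
  rw [map_mul, Complex.conj_ofReal, Complex.conj_I]
  push_cast; ring

lemma fourierInv_shift (g : Ed d → ℂ) (t y : Ed d) :
    𝓕⁻ (fun x => g (x - t)) y = ee (inner ℝ t y) * 𝓕⁻ g y := by
  rw [Real.fourierInv_eq', Real.fourierInv_eq', ← integral_const_mul]
  rw [← integral_sub_right_eq_self
    (fun x => ee (inner ℝ t y) * (Complex.exp (((2 * Real.pi * (inner ℝ x y : ℝ) : ℝ) : ℂ) * Complex.I) • g x)) t]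
  congr 1
  ext x
  rw [smul_eq_mul, smul_eq_mul, ← mul_assoc]
  congr 1
  change ee _ = ee _ * ee _
  rw [← ee_add, inner_sub_left]
  congr 1; ring

/-- modulation -/
def modu (t : Ed d) (φ : SchwartzMap (Ed d) ℂ) : SchwartzMap (Ed d) ℂ :=
  𝓕⁻ (SchwartzMap.compSubConstCLM ℂ t (𝓕 φ))

lemma modu_apply (t : Ed d) (φ : SchwartzMap (Ed d) ℂ) (y : Ed d) :
    modu t φ y = ee (inner ℝ t y) * φ y := by
  unfold modu
  rw [SchwartzMap.fourierInv_coe]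
  have : (⇑(SchwartzMap.compSubConstCLM ℂ t (𝓕 φ)) : Ed d → ℂ) = fun x => (𝓕 φ) (x - t) := by
    ext x; simp
  rw [this, fourierInv_shift, ← SchwartzMap.fourierInv_coe]
  simp

lemma fourier_modu (t : Ed d) (φ : SchwartzMap (Ed d) ℂ) (x : Ed d) :
    𝓕 (modu t φ) x = 𝓕 φ (x - t) := by
  unfold modu; simp

lemma modu_compact (t : Ed d) (φ : SchwartzMap (Ed d) ℂ) (h : HasCompactSupport φ) :
    HasCompactSupport (modu t φ) := by
  refine h.mono ?_
  intro x hx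
  rw [Function.mem_support, modu_apply] at hx
  exact right_ne_zero_of_mul hx

/-- a bump as a Schwartz function -/
lemma ex_bump (d : ℕ) (r : ℝ) (hr : 0 < r) : ∃ χ : SchwartzMap (Ed d) ℂ, HasCompactSupport χ ∧
    (∀ x, ∃ s : ℝ, 0 ≤ s ∧ s ≤ 1 ∧ χ x = (s : ℂ)) ∧ (∀ x, χ (-x) = χ x) ∧ (∀ x, ‖x‖ ≤ r / 2 → χ x = 1) ∧
    (∀ x, r ≤ ‖x‖ → χ x = 0) := by
  let b : ContDiffBump (0 : Ed d) := ⟨r / 2, r, by positivity, by linarith⟩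
  have hc : HasCompactSupport (fun x => ((b x : ℝ) : ℂ)) :=
    b.hasCompactSupport.comp_left (g := fun x : ℝ => (x : ℂ)) (by simp)
  have hs : ContDiff ℝ ((⊤ : ℕ∞) : WithTop ℕ∞) (fun x => ((b x : ℝ) : ℂ)) :=
    Complex.ofRealCLM.contDiff.comp b.contDiff
  refine ⟨hc.toSchwartzMap hs, hc, fun x => ⟨b x, b.nonneg, b.le_one, rfl⟩, fun x => ?_, fun x hx => ?_, fun x hx => ?_⟩
  · change ((b (-x) : ℝ) : ℂ) = b x
    rw [b.neg]
  · change ((b x : ℝ) : ℂ) = 1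
    rw [b.one_of_mem_closedBall (by simpa using hx)]; simp
  · change ((b x : ℝ) : ℂ) = 0
    rw [b.zero_of_le_dist (by simpa using hx)]; simp

lemma ex_pos_test (d : ℕ) : ∃ φ : SchwartzMap (Ed d) ℂ, HasCompactSupport φ ∧
    (∀ x, ∃ s : ℝ, 0 ≤ s ∧ 𝓕 φ x = (s : ℂ)) ∧
    ∃ ε > 0, ∃ δ > 0, ∀ x, ‖x‖ < δ → ε ≤ ‖𝓕 φ x‖ := by
  obtain ⟨χ, h1, h2, h3, h4, h5⟩ := ex_bump d 1 one_pos
  have hreal : ∀ x, ∃ s : ℝ, 𝓕 χ x = (s : ℂ) := by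
    intro x
    have : (starRingEnd ℂ) (𝓕 χ x) = 𝓕 χ x := by
      rw [SchwartzMap.fourier_coe, Real.fourier_eq', ← integral_conj]
      rw [← integral_neg_eq_self]
      congr 1
      ext v
      rw [h3]
      obtain ⟨s, -, -, hs⟩ := h2 v
      rw [hs, smul_eq_mul, smul_eq_mul, map_mul, ← Complex.exp_conj, map_mul, Complex.conj_ofReal,
        Complex.conj_ofReal, Complex.conj_I, inner_neg_left]
      congr 2
      push_cast; ring
    obtain ⟨r, hr⟩ := Complex.conj_eq_iff_real.1 this
    exact ⟨r, hr⟩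
  have h0 : 𝓕 χ 0 ≠ 0 := by
    rw [SchwartzMap.fourier_coe, Real.fourier_eq']
    choose s hs0 hs1 hs using h2
    have hI : ∫ v, Complex.exp (((-2 * Real.pi * (inner ℝ v (0 : Ed d) : ℝ) : ℝ) : ℂ) * Complex.I) • χ v = ((∫ v, s v : ℝ) : ℂ) := by
      refine Eq.trans ?_ (integral_ofReal (𝕜 := ℂ) (f := s) (μ := volume))
      congr 1
      ext v
      rw [hs]; simp
    rw [hI]
    have hsc : s = fun v => (χ v).re := by ext v; rw [hs]; simp
    have hcont : Continuous s := by
      rw [hsc]; exact Complex.continuous_re.comp χ.continuous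
    have hcs : HasCompactSupport s := by
      rw [hsc]; exact h1.comp_left (g := Complex.re) (by simp)
    have := hcont.integral_pos_of_hasCompactSupport_nonneg_nonzero (μ := volume) (x := 0) hcs hs0 (by
      have := h4 0 (by simp)
      rw [hs] at this
      intro h
      rw [h] at this; simp at this)
    exact_mod_cast this.ne'
  let φ := SchwartzMap.convolution (ContinuousLinearMap.mul ℂ ℂ) χ χ
  have hφ : ∀ x, 𝓕 φ x = 𝓕 χ x * 𝓕 χ x := by
    intro x
    simp only [φ]
    rw [SchwartzMap.fourier_convolution]
    simp
  refine ⟨φ, ?_, fun x => ?_, ?_⟩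
  · have : (⇑φ : Ed d → ℂ) = MeasureTheory.convolution χ χ (ContinuousLinearMap.mul ℂ ℂ) volume := by
      ext x
      exact SchwartzMap.convolution_apply _ _ _ _
    rw [this]
    exact h1.convolution _ h1
  · obtain ⟨s, hs⟩ := hreal x
    refine ⟨s * s, mul_self_nonneg s, ?_⟩
    rw [hφ, hs]; simp
  · have hc : Continuous (fun x => ‖𝓕 φ x‖) := (𝓕 φ).continuous.norm
    have hp : 0 < ‖𝓕 φ 0‖ := by
      rw [hφ]; simp only [norm_pos_iff]; exact mul_ne_zero h0 h0
    have := (hc.tendsto 0).eventually (lt_mem_nhds (half_lt_self hp))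
    obtain ⟨δ, hδ, h⟩ := Metric.eventually_nhds_iff.1 this
    refine ⟨_, half_pos hp, δ, hδ, fun x hx => (h (by simpa using hx)).le⟩

lemma trans_bdd (μ ν : PPM (Ed d)) (hpos : μ.Nonneg) (hμt : μ.temperate) (hF : IsFT μ ν)
    (hν : PB ν.mass) : ∃ δ > 0, ∃ K : ℝ≥0∞, K ≠ ⊤ ∧ ∀ t : Ed d,
    ∑' x, ‖μ.mass x‖ₑ * (ball t δ).indicator 1 x ≤ K := by
  obtain ⟨φ, hc, hp, ε, hε, δ, hδ, hd⟩ := ex_pos_test d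
  refine ⟨δ, hδ, ENNReal.ofReal (ε⁻¹ * ∑' ω, ‖ν.mass ω * φ ω‖), ENNReal.ofReal_ne_top, fun t => ?_⟩
  have h1 := hF (modu t φ) (modu_compact t φ hc)
  simp only [PPM.pair, fourierCLE_apply] at h1
  have hs : Summable (fun x => ‖μ.mass x * 𝓕 (modu t φ) x‖) := (hμt (𝓕 (modu t φ))).norm
  have h2 : ∑' x, ‖μ.mass x * 𝓕 (modu t φ) x‖ ≤ ∑' ω, ‖ν.mass ω * φ ω‖ := by
    have e1 : ∀ x, ((‖μ.mass x * 𝓕 (modu t φ) x‖ : ℝ) : ℂ) = μ.mass x * 𝓕 (modu t φ) x := by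
      intro x
      rw [fourier_modu]
      obtain ⟨s, hs0, hs⟩ := hp (x - t)
      rw [hs, norm_mul, Complex.norm_real, Real.norm_of_nonneg hs0]
      push_cast
      rw [← hpos x]
    have e2 : ((∑' x, ‖μ.mass x * 𝓕 (modu t φ) x‖ : ℝ) : ℂ) = ∑' x, μ.mass x * 𝓕 (modu t φ) x := by
      rw [Complex.ofReal_tsum]
      exact tsum_congr e1
    have e3 : ∑' x, ‖μ.mass x * 𝓕 (modu t φ) x‖ = ‖∑' x, μ.mass x * 𝓕 (modu t φ) x‖ := by
      rw [← e2, Complex.norm_real, Real.norm_of_nonneg (tsum_nonneg fun _ => norm_nonneg _)]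
    have e4 : ∀ ω, ‖ν.mass ω * modu t φ ω‖ = ‖ν.mass ω * φ ω‖ := by
      intro ω
      rw [modu_apply, norm_mul, norm_mul, norm_mul, ee_norm, one_mul]
    rw [e3, h1]
    refine (norm_tsum_le_tsum_norm ?_).trans (le_of_eq (tsum_congr e4))
    simp_rw [e4]
    exact hν.summ φ
  calc ∑' x, ‖μ.mass x‖ₑ * (ball t δ).indicator 1 x
      ≤ ∑' x, ENNReal.ofReal (ε⁻¹ * ‖μ.mass x * 𝓕 (modu t φ) x‖) := by
        gcongr with x
        classical
        by_cases hx : x ∈ ball t δ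
        · rw [Set.indicator_of_mem hx, Pi.one_apply, mul_one, ← ofReal_norm_eq_enorm]
          apply ENNReal.ofReal_le_ofReal
          rw [norm_mul, fourier_modu]
          have := hd (x - t) (by simpa [dist_eq_norm] using hx)
          have h3 : ‖μ.mass x‖ * ε ≤ ‖μ.mass x‖ * ‖𝓕 φ (x - t)‖ := by gcongr
          rw [inv_mul_eq_div, le_div_iff₀ hε]
          exact h3
        · rw [Set.indicator_of_notMem hx]; simp
    _ = ENNReal.ofReal (ε⁻¹ * ∑' x, ‖μ.mass x * 𝓕 (modu t φ) x‖) := by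
        rw [← tsum_mul_left, ENNReal.ofReal_tsum_of_nonneg (fun x => by positivity) (hs.mul_left _)]
    _ ≤ _ := by gcongr

lemma wt_integrable (d : ℕ) : ∫⁻ t : Ed d, ENNReal.ofReal (wt d ‖t‖) < ⊤ := by
  have h := integrable_one_add_norm (E := Ed d) (μ := volume) (r := d + 1) (by simp)
  have h2 : Integrable (fun t : Ed d => wt d ‖t‖) := by
    refine h.congr (ae_of_all _ fun t => ?_)
    simp only [wt]
    rw [Real.rpow_neg (by positivity)]
    congr 1
    exact_mod_cast Real.rpow_natCast (1 + ‖t‖) (d + 1)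
  exact (hasFiniteIntegral_iff_ofReal (ae_of_all _ fun t => (wt_pos d (norm_nonneg t)).le)).1 h2.2

lemma PB_of_trans (μ : PPM (Ed d)) {δ : ℝ} (hδ : 0 < δ) {K : ℝ≥0∞} (hK : K ≠ ⊤)
    (h : ∀ t : Ed d, ∑' x, ‖μ.mass x‖ₑ * (ball t δ).indicator 1 x ≤ K) : PB μ.mass := by
  classical
  set c := volume (ball (0 : Ed d) δ) with hc
  have hc0 : c ≠ 0 := (measure_ball_pos volume 0 hδ).ne'
  have hct : c ≠ ⊤ := measure_ball_lt_top.ne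
  set S := Function.support μ.mass
  haveI : Countable S := μ.countable.to_subtype
  have hsub : ∀ g : Ed d → ℝ≥0∞, ∑' x : S, ‖μ.mass x‖ₑ * g x = ∑' x, ‖μ.mass x‖ₑ * g x := by
    intro g
    apply tsum_subtype_eq_of_support_subset (f := fun x => ‖μ.mass x‖ₑ * g x)
    intro x hx
    simp only [Function.mem_support, ne_eq, mul_eq_zero, not_or] at hx
    intro h0
    exact hx.1 (by simp [h0])
  set G : Ed d → ℝ≥0∞ := fun t => ENNReal.ofReal ((1 + δ) ^ (d + 1)) * ENNReal.ofReal (wt d ‖t‖) with hG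
  have hGm : Measurable G := by
    simp only [hG, wt]
    fun_prop
  have hGi : ∫⁻ t, G t ≠ ⊤ := by
    rw [hG, lintegral_const_mul' _ _ ENNReal.ofReal_ne_top]
    exact ENNReal.mul_ne_top ENNReal.ofReal_ne_top (wt_integrable d).ne
  have key : ∀ x : Ed d, ENNReal.ofReal (wt d ‖x‖) * c ≤ ∫⁻ t, (ball t δ).indicator 1 x * G t := by
    intro x
    have e1 : ENNReal.ofReal (wt d ‖x‖) * c = ∫⁻ t, (ball x δ).indicator (fun _ => ENNReal.ofReal (wt d ‖x‖)) t := by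
      rw [lintegral_indicator measurableSet_ball, setLIntegral_const, hc, Measure.addHaar_ball_center volume x]
    rw [e1]
    apply lintegral_mono
    intro t
    by_cases ht : t ∈ ball x δ
    · have ht' : x ∈ ball t δ := by rwa [mem_ball_comm]
      simp only [Set.indicator_of_mem ht, Set.indicator_of_mem ht', Pi.one_apply, one_mul, hG]
      rw [← ENNReal.ofReal_mul (by positivity)]
      apply ENNReal.ofReal_le_ofReal
      unfold wt
      rw [← div_eq_mul_inv, inv_eq_one_div, div_le_div_iff₀ (by positivity) (by positivity), one_mul, ← mul_pow]
      apply pow_le_pow_left₀ (by positivity)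
      have : ‖t‖ ≤ ‖x‖ + δ := by
        have h1 : ‖t - x‖ < δ := by simpa [dist_eq_norm] using ht
        have h2 : ‖t‖ ≤ ‖t - x‖ + ‖x‖ := by simpa using norm_add_le (t - x) x
        linarith
      nlinarith [norm_nonneg x]
    · simp [Set.indicator_of_notMem ht]
  have h1 : (∑' x, ‖μ.mass x‖ₑ * ENNReal.ofReal (wt d ‖x‖)) * c ≤ K * ∫⁻ t, G t := by
    calc (∑' x, ‖μ.mass x‖ₑ * ENNReal.ofReal (wt d ‖x‖)) * c
        = ∑' x : S, ‖μ.mass x‖ₑ * (ENNReal.ofReal (wt d ‖(x : Ed d)‖) * c) := by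
          rw [hsub (fun x => ENNReal.ofReal (wt d ‖x‖) * c), ← ENNReal.tsum_mul_right]
          simp_rw [mul_assoc]
      _ ≤ ∑' x : S, ‖μ.mass x‖ₑ * ∫⁻ t, (ball t δ).indicator 1 (x : Ed d) * G t := by
          gcongr with x
          exact key x
      _ = ∑' x : S, ∫⁻ t, ‖μ.mass x‖ₑ * ((ball t δ).indicator 1 (x : Ed d) * G t) := by
          apply tsum_congr
          intro x
          rw [lintegral_const_mul' _ _ (by simp)]
      _ = ∫⁻ t, ∑' x : S, ‖μ.mass x‖ₑ * ((ball t δ).indicator 1 (x : Ed d) * G t) := by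
          rw [lintegral_tsum]
          intro x
          refine (Measurable.const_mul ?_ _).aemeasurable
          refine Measurable.mul ?_ hGm
          have : (fun t => (ball t δ).indicator (1 : Ed d → ℝ≥0∞) (x : Ed d)) = (ball (x : Ed d) δ).indicator 1 := by
            ext t
            simp only [Set.indicator_apply, mem_ball_comm, Pi.one_apply]
          rw [this]
          exact measurable_one.indicator measurableSet_ball
      _ ≤ ∫⁻ t, K * G t := by
          apply lintegral_mono
          intro t
          calc _ = (∑' x : S, ‖μ.mass x‖ₑ * (ball t δ).indicator 1 (x : Ed d)) * G t := by
                simp only [← ENNReal.tsum_mul_right, mul_assoc]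
            _ ≤ _ := by
                rw [hsub (fun x => (ball t δ).indicator 1 x)]
                exact mul_le_mul_left (h t) _
      _ = _ := lintegral_const_mul' _ _ hK
  have h2 : ∑' x, ‖μ.mass x‖ₑ * ENNReal.ofReal (wt d ‖x‖) ≠ ⊤ := by
    intro htop
    rw [htop, ENNReal.top_mul hc0] at h1
    exact ENNReal.mul_ne_top hK hGi (top_le_iff.1 h1)
  have h3 := ENNReal.summable_toReal h2
  refine h3.congr fun x => ?_
  rw [ENNReal.toReal_mul, ENNReal.toReal_ofReal (wt_pos d (norm_nonneg _)).le]
  simp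

end transl


section ext
open FourierTransform

/-- cut-off -/
def cutf (χ φ : SchwartzMap (Ed d) ℂ) (a : ℝ) (y : Ed d) : ℂ := χ (a • y) * φ y

lemma cutf_smooth (χ φ : SchwartzMap (Ed d) ℂ) (a : ℝ) :
    ContDiff ℝ ((⊤ : ℕ∞) : WithTop ℕ∞) (cutf χ φ a) := by
  have h1 : ContDiff ℝ ((⊤ : ℕ∞) : WithTop ℕ∞) (fun y : Ed d => χ (a • y)) :=
    (χ.smooth ⊤).comp (contDiff_const_smul a)
  exact h1.mul (φ.smooth ⊤)

lemma cutf_compact (χ φ : SchwartzMap (Ed d) ℂ) (hχ : HasCompactSupport χ) (a : ℝ) (ha : a ≠ 0) :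
    HasCompactSupport (cutf χ φ a) := by
  have h1 : HasCompactSupport (fun y : Ed d => χ (a • y)) :=
    hχ.comp_homeomorph (Homeomorph.smulOfNeZero a ha)
  exact h1.mul_right

lemma cutf_deriv (χ φ : SchwartzMap (Ed d) ℂ) (a : ℝ) (ha0 : 0 ≤ a) (ha1 : a ≤ 1) (p : ℕ) (y : Ed d) :
    ‖iteratedFDeriv ℝ p (cutf χ φ a) y‖ ≤ ∑ i ∈ Finset.range (p + 1),
      (p.choose i : ℝ) * SchwartzMap.seminorm ℝ 0 i χ * ‖iteratedFDeriv ℝ (p - i) φ y‖ := by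
  have h1 : ContDiff ℝ ((⊤ : ℕ∞) : WithTop ℕ∞) (fun y : Ed d => χ (a • y)) :=
    (χ.smooth ⊤).comp (contDiff_const_smul a)
  refine (norm_iteratedFDeriv_mul_le h1 (φ.smooth ⊤) y (n := p) (by exact_mod_cast le_top)).trans ?_
  gcongr with i hi
  rw [iteratedFDeriv_comp_const_smul a (χ.smooth i)]
  rw [norm_smul, norm_pow, Real.norm_of_nonneg ha0]
  calc a ^ i * ‖iteratedFDeriv ℝ i χ (a • y)‖ ≤ 1 * ‖iteratedFDeriv ℝ i χ (a • y)‖ := by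
        gcongr; exact pow_le_one₀ ha0 ha1
    _ ≤ _ := by rw [one_mul]; exact SchwartzMap.norm_iteratedFDeriv_le_seminorm ℝ χ i _

lemma cutf_fourier (χ φ : SchwartzMap (Ed d) ℂ) (hχ : HasCompactSupport χ) : ∃ B : ℝ, 0 ≤ B ∧
    ∀ a : ℝ, 0 < a → a ≤ 1 → ∀ x, ‖𝓕 (cutf χ φ a) x‖ ≤ B * wt d ‖x‖ := by
  let g : ℕ → Ed d → ℝ := fun p y => ∑ i ∈ Finset.range (p + 1),
      (p.choose i : ℝ) * SchwartzMap.seminorm ℝ 0 i χ * ‖iteratedFDeriv ℝ (p - i) φ y‖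
  have hgi : ∀ p, Integrable (g p) := by
    intro p
    refine integrable_finset_sum _ fun i _ => ?_
    have := SchwartzMap.integrable_pow_mul_iteratedFDeriv volume φ 0 (p - i)
    simp only [pow_zero, one_mul] at this
    exact this.const_mul _
  have hg0 : ∀ p y, 0 ≤ g p y := by
    intro p y
    refine Finset.sum_nonneg fun i _ => by positivity
  set B : ℕ → ℝ := fun n => 2 ^ n * ∑ p ∈ Finset.range (n + 1), ∫ y, g p y with hB
  have hB0 : ∀ n, 0 ≤ B n := by
    intro n
    have : ∀ p, 0 ≤ ∫ y, g p y := fun p => integral_nonneg (hg0 p)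
    exact mul_nonneg (by positivity) (Finset.sum_nonneg fun p _ => this p)
  have hb : ∀ a : ℝ, 0 < a → a ≤ 1 → ∀ (n : ℕ) x, ‖x‖ ^ n * ‖𝓕 (cutf χ φ a) x‖ ≤ B n := by
    intro a ha ha1 n x
    have h1 := Real.pow_mul_norm_iteratedFDeriv_fourier_le (f := cutf χ φ a) (K := ⊤) (N := ⊤)
      (cutf_smooth χ φ a) (by
        intro k n _ _
        exact SchwartzMap.integrable_pow_mul_iteratedFDeriv volume
          ((cutf_compact χ φ hχ a ha.ne').toSchwartzMap (cutf_smooth χ φ a)) k n) (k := 0) (n := n)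
        le_top le_top x
    rw [norm_iteratedFDeriv_zero] at h1
    refine h1.trans ?_
    simp only [pow_zero, one_mul, hB, Nat.cast_zero, mul_zero, zero_add]
    rw [Finset.sum_product, Finset.range_one, Finset.sum_singleton]
    simp only [pow_zero, one_mul]
    refine mul_le_mul_of_nonneg_left (Finset.sum_le_sum fun p hp => ?_) (by positivity)
    refine integral_mono_of_nonneg (ae_of_all _ fun y => norm_nonneg (iteratedFDeriv ℝ p (cutf χ φ a) y)) (hgi p) (ae_of_all _ fun y => ?_)
    exact cutf_deriv χ φ a ha.le ha1 p y
  refine ⟨2 ^ (d + 1) * (B 0 + B (d + 1)), by have := hB0 0; have := hB0 (d+1); positivity, ?_⟩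
  intro a ha ha1 x
  unfold wt
  rw [← div_eq_mul_inv, le_div_iff₀ (by positivity)]
  have h0 := hb a ha ha1 0 x
  have h1 := hb a ha ha1 (d + 1) x
  have h2 : (1 + ‖x‖) ^ (d + 1) ≤ 2 ^ (d + 1) * (1 + ‖x‖ ^ (d + 1)) := by
    rcases le_total ‖x‖ 1 with h | h
    · calc (1 + ‖x‖) ^ (d + 1) ≤ 2 ^ (d + 1) := by gcongr; linarith
        _ ≤ _ := by
          have : 0 ≤ ‖x‖ ^ (d + 1) := by positivity
          nlinarith [pow_pos (two_pos : (0:ℝ) < 2) (d + 1)]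
    · calc (1 + ‖x‖) ^ (d + 1) ≤ (2 * ‖x‖) ^ (d + 1) := by gcongr; linarith
        _ = 2 ^ (d + 1) * ‖x‖ ^ (d + 1) := mul_pow _ _ _
        _ ≤ _ := by gcongr; linarith
  calc ‖𝓕 (cutf χ φ a) x‖ * (1 + ‖x‖) ^ (d + 1)
      ≤ ‖𝓕 (cutf χ φ a) x‖ * (2 ^ (d + 1) * (1 + ‖x‖ ^ (d + 1))) := by gcongr
    _ = 2 ^ (d + 1) * (‖x‖ ^ 0 * ‖𝓕 (cutf χ φ a) x‖ + ‖x‖ ^ (d + 1) * ‖𝓕 (cutf χ φ a) x‖) := by ring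
    _ ≤ _ := by gcongr

lemma ft_ext (μ ν : PPM (Ed d)) (hμ : PB μ.mass) (hν : PB ν.mass) (hF : IsFT μ ν)
    (φ : SchwartzMap (Ed d) ℂ) : ∑' x, μ.mass x * 𝓕 φ x = ∑' ω, ν.mass ω * φ ω := by
  obtain ⟨χ, hc, h2, -, h4, -⟩ := ex_bump d 1 one_pos
  have hχ1 : ∀ x, ‖χ x‖ ≤ 1 := by
    intro x
    obtain ⟨s, h0, h1, hs⟩ := h2 x
    rw [hs, Complex.norm_real, Real.norm_of_nonneg h0]; exact h1
  have hχ0 : χ 0 = 1 := h4 0 (by simp)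
  let a : ℕ → ℝ := fun n => 1 / ((n : ℝ) + 1)
  have ha : ∀ n, 0 < a n := fun n => Nat.one_div_pos_of_nat
  have ha1 : ∀ n, a n ≤ 1 := fun n => by
    simp only [a]
    rw [div_le_one (by positivity)]
    have : (0 : ℝ) ≤ n := by positivity
    linarith
  have hat : Tendsto a atTop (𝓝 0) := tendsto_one_div_add_atTop_nhds_zero_nat
  let Φ : ℕ → SchwartzMap (Ed d) ℂ := fun n =>
    (cutf_compact χ φ hc (a n) (ha n).ne').toSchwartzMap (cutf_smooth χ φ (a n))
  have hΦ : ∀ n, (⇑(Φ n) : Ed d → ℂ) = cutf χ φ (a n) := fun n => rfl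
  have hpt : ∀ y, Tendsto (fun n => cutf χ φ (a n) y) atTop (𝓝 (φ y)) := by
    intro y
    have h1 : Tendsto (fun n => a n • y) atTop (𝓝 0) := by simpa using hat.smul_const y
    have h2 : Tendsto (fun n => χ (a n • y)) atTop (𝓝 1) := by
      have := (χ.continuous.tendsto 0).comp h1
      rwa [hχ0] at this
    simpa [cutf] using h2.mul_const (φ y)
  have hle : ∀ n y, ‖cutf χ φ (a n) y‖ ≤ ‖φ y‖ := by
    intro n y
    unfold cutf
    rw [norm_mul]
    exact mul_le_of_le_one_left (norm_nonneg _) (hχ1 _)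
  have hptF : ∀ x, Tendsto (fun n => 𝓕 (cutf χ φ (a n)) x) atTop (𝓝 (𝓕 φ x)) := by
    intro x
    rw [SchwartzMap.fourier_coe]
    simp only [Real.fourier_eq']
    refine tendsto_integral_of_dominated_convergence (fun y => ‖φ y‖) ?_ φ.integrable.norm ?_ ?_
    · intro n
      have := (cutf_smooth χ φ (a n)).continuous
      refine Continuous.aestronglyMeasurable ?_
      fun_prop
    · intro n
      refine ae_of_all _ fun y => ?_
      rw [norm_smul, Complex.norm_exp_ofReal_mul_I, one_mul]
      exact hle n y
    · exact ae_of_all _ fun y => (hpt y).const_smul _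
  obtain ⟨B, hB0, hB⟩ := cutf_fourier χ φ hc
  have hL : Tendsto (fun n => ∑' x, μ.mass x * 𝓕 (cutf χ φ (a n)) x) atTop (𝓝 (∑' x, μ.mass x * 𝓕 φ x)) := by
    refine tendsto_tsum_of_dominated_convergence (hμ.mul_left B) (fun x => (hptF x).const_mul _) ?_
    refine Eventually.of_forall fun n x => ?_
    rw [norm_mul]
    calc _ ≤ ‖μ.mass x‖ * (B * wt d ‖x‖) := by gcongr; exact hB _ (ha n) (ha1 n) x
      _ = _ := by ring
  have hRt : Tendsto (fun n => ∑' x, ν.mass x * cutf χ φ (a n) x) atTop (𝓝 (∑' x, ν.mass x * φ x)) := by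
    refine tendsto_tsum_of_dominated_convergence (hν.summ φ) (fun x => (hpt x).const_mul _) ?_
    refine Eventually.of_forall fun n x => ?_
    rw [norm_mul, norm_mul]
    gcongr; exact hle n x
  have heq : ∀ n, ∑' x, μ.mass x * 𝓕 (cutf χ φ (a n)) x = ∑' x, ν.mass x * cutf χ φ (a n) x := by
    intro n
    have := hF (Φ n) (cutf_compact χ φ hc (a n) (ha n).ne')
    simpa only [PPM.pair, fourierCLE_apply, SchwartzMap.fourier_coe, hΦ] using this
  simp_rw [heq] at hL
  exact tendsto_nhds_unique hL hRt

/-- shifted pairing -/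
def FF (m : Ed d → ℂ) (ψ : Ed d → ℂ) (t : Ed d) : ℂ := ∑' x, m x * ψ (x - t)

lemma FF_eq (μ ν : PPM (Ed d)) (hμ : PB μ.mass) (hν : PB ν.mass) (hF : IsFT μ ν)
    (ψ : SchwartzMap (Ed d) ℂ) (t : Ed d) :
    FF μ.mass ψ t = ∑' ω, ν.mass ω * (𝓕⁻ ψ) ω * ee (inner ℝ t ω) := by
  have h := ft_ext μ ν hμ hν hF (modu t (𝓕⁻ ψ))
  simp only [fourier_modu, modu_apply] at h
  have h2 : 𝓕 (𝓕⁻ ψ) = ψ := by simp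
  rw [h2] at h
  unfold FF
  rw [h]
  apply tsum_congr
  intro ω; ring

/-- Bohr-type continuity -/
lemma FF_VC (μ ν : PPM (Ed d)) (hμ : PB μ.mass) (hν : PB ν.mass) (hF : IsFT μ ν)
    (ψ : SchwartzMap (Ed d) ℂ) (τ : ℕ → Ed d)
    (hτ : ∀ ω, ν.mass ω ≠ 0 → Tendsto (fun k => ee (inner ℝ (τ k) ω)) atTop (𝓝 1)) (x : Ed d) :
    Tendsto (fun k => FF μ.mass ψ (x + τ k)) atTop (𝓝 (FF μ.mass ψ x)) := by
  simp_rw [FF_eq μ ν hμ hν hF ψ]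
  refine tendsto_tsum_of_dominated_convergence (hν.summ (𝓕⁻ ψ)) (fun ω => ?_) ?_
  · by_cases h : ν.mass ω = 0
    · simp [h]
    · have : ∀ k, ee (inner ℝ (x + τ k) ω) = ee (inner ℝ x ω) * ee (inner ℝ (τ k) ω) := by
        intro k; rw [inner_add_left, ee_add]
      simp_rw [this]
      have h2 := ((hτ ω h).const_mul (ee (inner ℝ x ω))).const_mul (ν.mass ω * (𝓕⁻ ψ) ω)
      rwa [mul_one] at h2
  · refine Eventually.of_forall fun k ω => ?_
    rw [norm_mul, ee_norm, mul_one]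

end ext


section rep
open FourierTransform

lemma fourierInv_scale (g : Ed d → ℂ) (n : ℝ) (hn : 0 < n) (ω : Ed d) :
    𝓕⁻ (fun z => g (n • z)) ω = (((n : ℂ) ^ d)⁻¹) * 𝓕⁻ g (n⁻¹ • ω) := by
  rw [Real.fourierInv_eq', Real.fourierInv_eq']
  have h := Measure.integral_comp_smul (volume : Measure (Ed d))
    (fun v => Complex.exp (((2 * Real.pi * (inner ℝ v (n⁻¹ • ω) : ℝ) : ℝ) : ℂ) * Complex.I) • g v) n
  have e1 : ∀ v : Ed d, (inner ℝ (n • v) (n⁻¹ • ω) : ℝ) = inner ℝ v ω := by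
    intro v
    rw [real_inner_smul_left, real_inner_smul_right, ← mul_assoc, mul_inv_cancel₀ hn.ne', one_mul]
  simp only [e1] at h
  rw [h, finrank_euclideanSpace_fin, abs_of_pos (by positivity), Complex.real_smul]
  push_cast
  rfl

/-- scaling -/
def scl (n : ℝ) (hn : n ≠ 0) (ψ : SchwartzMap (Ed d) ℂ) : SchwartzMap (Ed d) ℂ :=
  SchwartzMap.compCLMOfContinuousLinearEquiv ℂ
    (ContinuousLinearEquiv.smulLeft (R₁ := ℝ) (M₁ := Ed d) (Units.mk0 n hn)) ψ

lemma scl_coe (n : ℝ) (hn : n ≠ 0) (ψ : SchwartzMap (Ed d) ℂ) :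
    (⇑(scl n hn ψ) : Ed d → ℂ) = fun z => ψ (n • z) := by
  ext z
  simp [scl, Units.smul_def]

lemma FF_small (μ : PPM (Ed d)) (hμ : PB μ.mass) (ψ : Ed d → ℂ) (h0 : ψ 0 = 1)
    (h1 : ∀ x, ‖ψ x‖ ≤ 1) (hs : ∀ x, 1 ≤ ‖x‖ → ψ x = 0) (p : Ed d) :
    Tendsto (fun n : ℕ => FF μ.mass (fun z => ψ ((n : ℝ) • z)) p) atTop (𝓝 (μ.mass p)) := by
  classical
  have e1 : μ.mass p = ∑' x, μ.mass x * (if x = p then 1 else 0) := by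
    rw [tsum_eq_single p]
    · simp
    · intro x hx; simp [hx]
  rw [e1]
  refine tendsto_tsum_of_dominated_convergence (hμ.mul_left (wt d (‖p‖ + 1))⁻¹) (fun x => ?_) ?_
  · apply Tendsto.const_mul
    split_ifs with h
    · subst h; simp [h0]
    · apply tendsto_const_nhds.congr'
      have hp : 0 < ‖x - p‖ := norm_pos_iff.2 (sub_ne_zero.2 h)
      obtain ⟨N, hN⟩ := exists_nat_ge (1 / ‖x - p‖)
      filter_upwards [eventually_ge_atTop N] with n hn
      rw [hs]
      rw [norm_smul, Real.norm_natCast]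
      rw [div_le_iff₀ hp] at hN
      refine hN.trans ?_
      gcongr
  · filter_upwards [eventually_ge_atTop 1] with n hn x
    rw [norm_mul]
    by_cases h : ‖x - p‖ < 1
    · have h2 : 1 ≤ (wt d (‖p‖ + 1))⁻¹ * wt d ‖x‖ := by
        rw [inv_mul_eq_div, one_le_div (wt_pos d (by positivity))]
        unfold wt
        gcongr
        have h2 : ‖x‖ ≤ ‖x - p‖ + ‖p‖ := by simpa using norm_add_le (x - p) p
        linarith
      calc ‖μ.mass x‖ * ‖ψ ((n : ℝ) • (x - p))‖ ≤ ‖μ.mass x‖ * 1 := by gcongr; exact h1 _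
        _ ≤ ‖μ.mass x‖ * ((wt d (‖p‖ + 1))⁻¹ * wt d ‖x‖) := by gcongr
        _ = _ := by ring
    · rw [hs]
      · have := (wt_pos d (norm_nonneg x)).le
        have := (wt_pos d (by positivity : 0 ≤ ‖p‖ + 1)).le
        simp only [norm_zero, mul_zero]
        positivity
      · rw [norm_smul, Real.norm_natCast]
        push Not at h
        have : (1 : ℝ) ≤ n := by exact_mod_cast hn
        nlinarith

lemma get_rep (μ ν : PPM (Ed d)) (hμ : PB μ.mass) (hν : PB ν.mass) (hF : IsFT μ ν)
    (hgrow : ∃ C : ℝ, ∀ᶠ r : ℝ in atTop, ν.var (ball 0 r) ≤ ENNReal.ofReal (C * r ^ d)) :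
    ∃ (H : Type) (_ : NormedAddCommGroup H) (_ : InnerProductSpace ℂ H) (_ : CompleteSpace H)
      (R : URep (Ed d) H) (v w : H), ∀ x, R.f v w 1 x = μ.mass x := by
  obtain ⟨ψ, hc, h2, h3, h4, h5⟩ := ex_bump d 1 one_pos
  have hψ1 : ∀ x, ‖ψ x‖ ≤ 1 := by
    intro x
    obtain ⟨s, h0, h1, hs⟩ := h2 x
    rw [hs, Complex.norm_real, Real.norm_of_nonneg h0]; exact h1
  obtain ⟨-, n0, K, hn0, hK⟩ := grow_scaled ν hgrow (𝓕⁻ ψ)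
  have key : ∀ x, Tendsto (fun n : ℕ => ∑' ω, ν.mass ω * ((((n + n0 : ℕ) : ℂ) ^ d)⁻¹ *
      (𝓕⁻ ψ) ((((n + n0 : ℕ) : ℝ))⁻¹ • ω)) * ee (inner ℝ x ω)) atTop (𝓝 (μ.mass x)) := by
    intro x
    have h := (FF_small μ hμ ψ (h4 0 (by simp)) hψ1 h5 x).comp (tendsto_add_atTop_nat n0)
    refine h.congr fun n => ?_
    have hn : (0 : ℝ) < ((n + n0 : ℕ) : ℝ) := by
      have : 0 < n + n0 := by omega
      exact_mod_cast this
    simp only [Function.comp_apply]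
    generalize n + n0 = N at hn ⊢
    have e := FF_eq μ ν hμ hν hF (scl (N : ℝ) hn.ne' ψ) x
    rw [scl_coe] at e
    refine Eq.trans ?_ (e.trans ?_)
    · with_reducible rfl
    apply tsum_congr
    intro ω
    rw [SchwartzMap.fourierInv_coe, scl_coe, fourierInv_scale _ _ hn, ← SchwartzMap.fourierInv_coe,
      Complex.ofReal_natCast]
  have hK1 := fun n => (hK (n + n0) (by omega)).1
  have hK2 := fun n => (hK (n + n0) (by omega)).2
  clear hK
  exact exists_rep (Ω := Ed d) (V := Ed d) (fun ω x => ee (inner ℝ x ω)) (fun ω => by simp [ee_zero])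
    (fun ω x y => by rw [inner_add_left, ee_add]) (fun ω x => by rw [inner_neg_left, ee_neg])
    (fun ω x => ee_norm _) _
    K hK1 hK2 μ.mass key

end rep


section tau

lemma ex_subseq (S : Set (Ed d)) (hS : S.Countable) (s : ℕ → Ed d) : ∃ φ : ℕ → ℕ, StrictMono φ ∧
    ∀ ω ∈ S, ∃ z : ℂ, ‖z‖ = 1 ∧ Tendsto (fun n => ee (inner ℝ (s (φ n)) ω)) atTop (𝓝 z) := by
  haveI : Countable S := hS.to_subtype
  obtain ⟨a, φ, hφ, ha⟩ := CompactSpace.tendsto_subseq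
    (fun (n : ℕ) (ω : S) => Circle.exp (2 * Real.pi * (inner ℝ (s n) (ω : Ed d) : ℝ)))
  refine ⟨φ, hφ, fun ω hω => ⟨a ⟨ω, hω⟩, Circle.norm_coe _, ?_⟩⟩
  have h1 := (tendsto_pi_nhds.1 ha) ⟨ω, hω⟩
  have h2 := ((by fun_prop : Continuous (fun z : Circle => (z : ℂ))).tendsto (a ⟨ω, hω⟩)).comp h1
  refine h2.congr fun n => ?_
  simp only [Function.comp_apply, ee, Circle.coe_exp]

lemma ex_tau (S : Set (Ed d)) (hS : S.Countable) (s : ℕ → Ed d) (Q : ℕ → ℕ → ℕ → Prop)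
    (hQ : ∀ k j, ∀ᶠ l in atTop, Q k j l) : ∃ j l : ℕ → ℕ, (∀ k, Q k (j k) (l k)) ∧
    ∀ ω ∈ S, Tendsto (fun k => ee (inner ℝ (s (l k) - s (j k)) ω)) atTop (𝓝 1) := by
  obtain ⟨φ, hφ, hz⟩ := ex_subseq S hS s
  have h1 : ∀ k, ∃ n, k ≤ n ∧ Q k (φ k) (φ n) := by
    intro k
    have := (hφ.tendsto_atTop.eventually (hQ k (φ k))).and (eventually_ge_atTop k)
    obtain ⟨n, hn⟩ := this.exists
    exact ⟨n, hn.2, hn.1⟩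
  choose n hn hq using h1
  refine ⟨φ, fun k => φ (n k), hq, fun ω hω => ?_⟩
  obtain ⟨z, hz1, hz2⟩ := hz ω hω
  have hnt : Tendsto n atTop atTop := tendsto_atTop_mono hn tendsto_id
  have h3 := (hz2.comp hnt).mul ((Complex.continuous_conj.tendsto z).comp hz2)
  have h4 : z * (starRingEnd ℂ) z = 1 := by
    rw [Complex.mul_conj, Complex.normSq_eq_norm_sq, hz1]; simp
  rw [h4] at h3
  refine h3.congr fun k => ?_
  simp only [Function.comp_apply]
  rw [← ee_neg, ← ee_add, inner_sub_left, sub_eq_add_neg]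

/-- moment curve -/
def mcurve (d : ℕ) (n : ℕ) : Ed d := WithLp.toLp 2 (fun i : Fin d => (n : ℝ) ^ ((i : ℕ) + 1))

lemma mcurve_inner (l : Ed d) (hl : l ≠ 0) : ∃ c > 0, ∀ᶠ n : ℕ in atTop,
    c * (n : ℝ) ≤ |(inner ℝ l (mcurve d n) : ℝ)| := by
  let q : Polynomial ℝ := ∑ i : Fin d, Polynomial.monomial (i : ℕ) (l i)
  have hq : q ≠ 0 := by
    intro h0
    apply hl
    ext i
    have h1 : q.coeff i = l i := by
      simp only [q, Polynomial.finset_sum_coeff, Polynomial.coeff_monomial]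
      rw [Finset.sum_eq_single i]
      · simp
      · intro b _ hb
        have : (b : ℕ) ≠ i := fun h => hb (Fin.ext h)
        simp [this]
      · simp
    rw [← h1, h0]; simp
  have hin : ∀ n : ℕ, (inner ℝ l (mcurve d n) : ℝ) = n * q.eval (n : ℝ) := by
    intro n
    simp only [q, mcurve, PiLp.inner_apply, Polynomial.eval_finset_sum, Polynomial.eval_monomial,
      Finset.mul_sum]
    apply Finset.sum_congr rfl
    intro i _
    simp
    ring
  have hc : ∃ c > 0, ∀ᶠ x : ℝ in atTop, c ≤ |q.eval x| := by
    rcases Nat.eq_zero_or_pos q.natDegree with h | h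
    · rw [Polynomial.eq_C_of_natDegree_eq_zero h] at hq ⊢
      refine ⟨|q.coeff 0|, ?_, Eventually.of_forall fun x => by simp⟩
      refine abs_pos.2 ?_; intro h0; apply hq; rw [h0]; simp
    · have := q.abs_tendsto_atTop (Polynomial.natDegree_pos_iff_degree_pos.1 h)
      exact ⟨1, one_pos, this.eventually_ge_atTop 1⟩
  obtain ⟨c, hc0, hc1⟩ := hc
  refine ⟨c, hc0, ?_⟩
  filter_upwards [tendsto_natCast_atTop_atTop.eventually hc1] with n hn
  rw [hin, abs_mul, Nat.abs_cast, mul_comm]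
  gcongr

lemma ex_generic (S : Set (Ed d)) (hS : S.Countable) : ∃ τ : ℕ → Ed d,
    (∀ ω ∈ S, Tendsto (fun k => ee (inner ℝ (τ k) ω)) atTop (𝓝 1)) ∧
    ∀ l : Ed d, l ≠ 0 → Tendsto (fun k => |(inner ℝ l (τ k) : ℝ)|) atTop atTop := by
  obtain ⟨j, l, hQ, hS⟩ := ex_tau S hS (mcurve d)
    (fun k j l => ((k : ℝ) + 1) * (‖mcurve d j‖ + 1) ≤ l) (fun k j =>
      tendsto_natCast_atTop_atTop.eventually_ge_atTop _)
  refine ⟨fun k => mcurve d (l k) - mcurve d (j k), hS, fun v hv => ?_⟩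
  obtain ⟨c, hc, hev⟩ := mcurve_inner v hv
  have hl1 : ∀ k : ℕ, (k : ℝ) + 1 ≤ l k := fun k => by
    have h1 := hQ k
    have h2 := norm_nonneg (mcurve d (j k))
    have h3 : (0 : ℝ) ≤ k := by positivity
    nlinarith
  have hlt : Tendsto l atTop atTop := by
    refine tendsto_atTop_mono (fun k => ?_) tendsto_id
    have : ((k : ℕ) : ℝ) ≤ l k := by linarith [hl1 k]
    exact_mod_cast this
  obtain ⟨K, hK⟩ := exists_nat_ge (2 * ‖v‖ / c)
  have hlow : Tendsto (fun k : ℕ => c / 2 * (k : ℝ)) atTop atTop :=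
    tendsto_natCast_atTop_atTop.const_mul_atTop (by positivity)
  refine tendsto_atTop_mono' _ ?_ hlow
  filter_upwards [hlt.eventually hev, eventually_ge_atTop K] with k hk hkK
  rw [inner_sub_right]
  have h1 : |(inner ℝ v (mcurve d (j k)) : ℝ)| ≤ ‖v‖ * ‖mcurve d (j k)‖ := abs_real_inner_le_norm _ _
  have h2 := abs_sub_abs_le_abs_sub (inner ℝ v (mcurve d (l k)) : ℝ) (inner ℝ v (mcurve d (j k)))
  have h3 : ‖v‖ * ‖mcurve d (j k)‖ ≤ c / 2 * l k := by
    have h5 : 2 * ‖v‖ ≤ c * (k + 1) := by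
      rw [div_le_iff₀ hc] at hK
      have : (K : ℝ) ≤ k := by exact_mod_cast hkK
      nlinarith
    have h6 := hQ k
    have h7 := norm_nonneg (mcurve d (j k))
    have h8 : ‖v‖ * ‖mcurve d (j k)‖ ≤ (c * (k + 1) / 2) * ‖mcurve d (j k)‖ := by gcongr; linarith
    have h9 : c / 2 * (((k : ℝ) + 1) * (‖mcurve d (j k)‖ + 1)) ≤ c / 2 * l k := by gcongr
    have h10 : 0 ≤ c / 2 * ((k : ℝ) + 1) := by positivity
    nlinarith
  have h4 := hl1 k
  have h5 : c / 2 * k ≤ c / 2 * l k := mul_le_mul_of_nonneg_left (by linarith) (by positivity)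
  linarith

end tau


section glob
open FourierTransform

lemma PB.summ_shift {m : Ed d → ℂ} (h : PB m) (φ : SchwartzMap (Ed d) ℂ) (t : Ed d) :
    Summable fun x => m x * φ (x - t) := by
  have := (h.summ (SchwartzMap.compSubConstCLM ℂ t φ)).of_norm
  simpa using this

lemma FF_re_ge (μ : PPM (Ed d)) (hpos : μ.Nonneg) (hμ : PB μ.mass) (ψ : SchwartzMap (Ed d) ℂ)
    (hψ : ∀ x, ∃ s : ℝ, 0 ≤ s ∧ s ≤ 1 ∧ ψ x = (s : ℂ)) (t x : Ed d) (hx : ψ (x - t) = 1) :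
    ‖μ.mass x‖ ≤ (FF μ.mass ψ t).re := by
  have hs := hμ.summ_shift ψ t
  unfold FF
  rw [Complex.re_tsum hs]
  have h0 : ∀ y, 0 ≤ (μ.mass y * ψ (y - t)).re := by
    intro y
    obtain ⟨s, hs0, -, hs⟩ := hψ (y - t)
    rw [hs, hpos y, ← Complex.ofReal_mul, Complex.ofReal_re]
    positivity
  have hs' : Summable fun y => (μ.mass y * ψ (y - t)).re := (Complex.reCLM.summable hs)
  have := hs'.le_tsum x (fun y _ => h0 y)
  rw [hx, mul_one] at this
  have e : (μ.mass x).re = ‖μ.mass x‖ := by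
    conv_lhs => rw [hpos x]
    simp
  rw [e] at this
  exact this

lemma FF_ne (m : Ed d → ℂ) (ψ : Ed d → ℂ) (t : Ed d) (h : FF m ψ t ≠ 0) :
    ∃ x, m x ≠ 0 ∧ ψ (x - t) ≠ 0 := by
  by_contra hcon
  push Not at hcon
  apply h
  unfold FF
  rw [← tsum_zero (β := Ed d)]
  apply tsum_congr
  intro x
  by_cases hx : m x = 0
  · simp [hx]
  · simp [hcon x hx]

lemma FF_single (m : Ed d → ℂ) (ψ : Ed d → ℂ) (t y : Ed d) (hy : ψ (y - t) = 1)
    (h : ∀ x, m x ≠ 0 → ψ (x - t) ≠ 0 → x = y) : FF m ψ t = m y := by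
  unfold FF
  rw [tsum_eq_single y]
  · rw [hy, mul_one]
  · intro x hx
    by_contra hcon
    exact hx (h x (left_ne_zero_of_mul hcon) (right_ne_zero_of_mul hcon))

lemma near_point (μ ν : PPM (Ed d)) (hpos : μ.Nonneg) (hμ : PB μ.mass) (hν : PB ν.mass) (hF : IsFT μ ν)
    (τ : ℕ → Ed d)
    (hτ : ∀ ω, ν.mass ω ≠ 0 → Tendsto (fun k => ee (inner ℝ (τ k) ω)) atTop (𝓝 1)) (p : Ed d)
    (hp : μ.mass p ≠ 0) (r : ℝ) (hr : 0 < r) :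
    ∀ᶠ k in atTop, ∃ y, μ.mass y ≠ 0 ∧ ‖y - (p + τ k)‖ < r := by
  obtain ⟨ψ, hc, h2, h3, h4, h5⟩ := ex_bump d r hr
  have h6 := FF_VC μ ν hμ hν hF ψ τ hτ p
  have h7 := FF_re_ge μ hpos hμ ψ h2 p p (h4 _ (by simp; positivity))
  have h8 : FF μ.mass ψ p ≠ 0 := by
    intro h0
    rw [h0] at h7
    simp at h7
    exact hp h7
  filter_upwards [h6.eventually_ne h8] with k hk
  obtain ⟨x, hx, hx2⟩ := FF_ne _ _ _ hk
  refine ⟨x, hx, ?_⟩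
  by_contra hcon
  push Not at hcon
  exact hx2 (h5 _ hcon)

lemma glob_mass (μ ν : PPM (Ed d)) (hpos : μ.Nonneg) (hμ : PB μ.mass) (hν : PB ν.mass) (hF : IsFT μ ν)
    (τ : ℕ → Ed d)
    (hτ : ∀ ω, ν.mass ω ≠ 0 → Tendsto (fun k => ee (inner ℝ (τ k) ω)) atTop (𝓝 1))
    (E : Set (Ed d)) (hE : ∀ p r, ∀ᶠ k in atTop, ball (p + τ k) r ⊆ E) (c : ℝ)
    (hmass : ∀ l ∈ E ∩ Function.support μ.mass, c ≤ (μ.mass l).re) (p : Ed d) (hp : μ.mass p ≠ 0) :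
    c ≤ ‖μ.mass p‖ := by
  obtain ⟨ψ, hc, h2, h3, h4, h5⟩ := ex_bump d 1 one_pos
  have hψ1 : ∀ x, ‖ψ x‖ ≤ 1 := by
    intro x
    obtain ⟨s, h0, h1, hs⟩ := h2 x
    rw [hs, Complex.norm_real, Real.norm_of_nonneg h0]; exact h1
  have hlim := FF_small μ hμ ψ (h4 0 (by simp)) hψ1 h5 p
  have hlim2 := (Complex.continuous_re.tendsto _).comp hlim
  have e : ∀ x, (μ.mass x).re = ‖μ.mass x‖ := by
    intro x
    conv_lhs => rw [hpos x]
    simp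
  rw [← e]
  refine ge_of_tendsto hlim2 ?_
  filter_upwards [eventually_ge_atTop 1] with n hn
  have hn0 : (0 : ℝ) < n := by exact_mod_cast hn
  simp only [Function.comp_apply]
  have hcoe := scl_coe (n : ℝ) hn0.ne' ψ
  rw [← hcoe]
  have h6 := FF_VC μ ν hμ hν hF (scl (n : ℝ) hn0.ne' ψ) τ hτ p
  refine ge_of_tendsto ((Complex.continuous_re.tendsto _).comp h6) ?_
  have hr : (0 : ℝ) < 1 / 2 / n := by positivity
  filter_upwards [near_point μ ν hpos hμ hν hF τ hτ p hp _ hr, hE p (1 / 2 / n)] with k hk hkE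
  obtain ⟨y, hy, hyd⟩ := hk
  have hyE : y ∈ E := hkE (by simpa [dist_eq_norm] using hyd)
  refine (hmass y ⟨hyE, hy⟩).trans ?_
  rw [e]
  refine FF_re_ge μ hpos hμ _ (fun x => ?_) _ _ ?_
  · rw [hcoe]; exact h2 _
  · rw [hcoe]
    apply h4
    rw [norm_smul, Real.norm_natCast]
    rw [lt_div_iff₀ hn0] at hyd
    linarith

lemma glob_sep (μ ν : PPM (Ed d)) (hpos : μ.Nonneg) (hμ : PB μ.mass) (hν : PB ν.mass) (hF : IsFT μ ν)
    (τ : ℕ → Ed d)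
    (hτ : ∀ ω, ν.mass ω ≠ 0 → Tendsto (fun k => ee (inner ℝ (τ k) ω)) atTop (𝓝 1))
    (E : Set (Ed d)) (hE : ∀ p r, ∀ᶠ k in atTop, ball (p + τ k) r ⊆ E) (β : ℝ)
    (hsep : ∀ l ∈ E ∩ Function.support μ.mass, ∀ l' ∈ E ∩ Function.support μ.mass,
      l ≠ l' → β ≤ ‖l - l'‖) (p q : Ed d) (hp : μ.mass p ≠ 0) (hq : μ.mass q ≠ 0) (hpq : p ≠ q) :
    β ≤ ‖p - q‖ := by
  by_contra hcon
  push Not at hcon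
  have hpq' : 0 < ‖p - q‖ := norm_pos_iff.2 (sub_ne_zero.2 hpq)
  obtain ⟨r, hr, hr1, hr2⟩ : ∃ r > 0, ‖p - q‖ + 2 * r < β ∧ 2 * r < ‖p - q‖ := by
    refine ⟨min (β - ‖p - q‖) ‖p - q‖ / 4, ?_, ?_, ?_⟩
    · have : 0 < min (β - ‖p - q‖) ‖p - q‖ := lt_min (by linarith) hpq'
      positivity
    · have := min_le_left (β - ‖p - q‖) ‖p - q‖
      linarith
    · have := min_le_right (β - ‖p - q‖) ‖p - q‖
      linarith
  obtain ⟨k, ⟨y, hy, hyd⟩, ⟨z, hz, hzd⟩, hkE1, hkE2⟩ := ((near_point μ ν hpos hμ hν hF τ hτ p hp r hr).and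
    ((near_point μ ν hpos hμ hν hF τ hτ q hq r hr).and ((hE p r).and (hE q r)))).exists
  have hyE : y ∈ E := hkE1 (by simpa [dist_eq_norm] using hyd)
  have hzE : z ∈ E := hkE2 (by simpa [dist_eq_norm] using hzd)
  have e1 : y - z = (p - q) + ((y - (p + τ k)) - (z - (q + τ k))) := by abel
  have e2 : p - q = (y - z) - ((y - (p + τ k)) - (z - (q + τ k))) := by abel
  have h3 : ‖(y - (p + τ k)) - (z - (q + τ k))‖ < 2 * r := (norm_sub_le _ _).trans_lt (by linarith)
  have h1 : ‖y - z‖ ≤ ‖p - q‖ + ‖(y - (p + τ k)) - (z - (q + τ k))‖ := by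
    rw [e1]; exact norm_add_le _ _
  have h2 : ‖p - q‖ ≤ ‖y - z‖ + ‖(y - (p + τ k)) - (z - (q + τ k))‖ := by
    conv_lhs => rw [e2]
    exact norm_sub_le _ _
  have hyz : y ≠ z := by
    intro h
    rw [h] at h2
    simp only [sub_self, norm_zero, zero_add] at h2
    rw [h] at h3
    linarith
  have := hsep y ⟨hyE, hy⟩ z ⟨hzE, hz⟩ hyz
  linarith

lemma get_recur (μ ν : PPM (Ed d)) (hpos : μ.Nonneg) (hμ : PB μ.mass) (hν : PB ν.mass) (hF : IsFT μ ν)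
    (τ : ℕ → Ed d)
    (hτ : ∀ ω, ν.mass ω ≠ 0 → Tendsto (fun k => ee (inner ℝ (τ k) ω)) atTop (𝓝 1))
    (c β : ℝ) (hc : 0 < c) (hβ : 0 < β) (hm : ∀ x, μ.mass x = 0 ∨ c ≤ ‖μ.mass x‖)
    (hsep : ∀ x y, μ.mass x ≠ 0 → μ.mass y ≠ 0 → x ≠ y → β ≤ ‖x - y‖) : Recur μ.mass τ := by
  constructor
  · intro x hx ε hε
    set r := min ε β / 2 with hr
    have hr0 : 0 < r := by have := lt_min hε hβ; positivity
    have hrε : r < ε := by have := min_le_left ε β; have := lt_min hε hβ; linarith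
    have hrβ : 2 * r ≤ β := by have := min_le_right ε β; linarith
    obtain ⟨ψ, hcs, h2, h3, h4, h5⟩ := ex_bump d r hr0
    have huniq : ∀ t y, μ.mass y ≠ 0 → ‖y - t‖ ≤ r / 2 → FF μ.mass ψ t = μ.mass y := by
      intro t y hy hyt
      refine FF_single _ _ _ _ (h4 _ hyt) fun z hz hzt => ?_
      by_contra hne
      have h6 := hsep z y hz hy hne
      have h7 : ‖z - t‖ < r := by
        by_contra hcon
        push Not at hcon
        exact hzt (h5 _ hcon)
      have h8 : ‖z - y‖ ≤ ‖z - t‖ + ‖y - t‖ := by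
        have := norm_sub_le (z - t) (y - t)
        rwa [sub_sub_sub_cancel_right] at this
      linarith
    have h6 := FF_VC μ ν hμ hν hF ψ τ hτ x
    have e := huniq x x hx (by simp; positivity)
    rw [e] at h6
    filter_upwards [near_point μ ν hpos hμ hν hF τ hτ x hx (r / 2) (by positivity),
      (Metric.tendsto_nhds.1 h6) ε hε] with k hk hk2
    obtain ⟨y, hy, hyd⟩ := hk
    refine ⟨y, by linarith, ?_⟩
    rw [huniq _ y hy hyd.le, dist_eq_norm] at hk2
    exact hk2
  · intro x hx
    obtain ⟨r, hr0, hr⟩ : ∃ r > 0, ∀ y, μ.mass y ≠ 0 → r ≤ ‖y - x‖ := by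
      by_cases h : ∃ q, μ.mass q ≠ 0 ∧ ‖q - x‖ < β / 2
      · obtain ⟨q, hq, hqx⟩ := h
        have hne : q ≠ x := by rintro rfl; exact hq hx
        refine ⟨‖q - x‖, norm_pos_iff.2 (sub_ne_zero.2 hne), fun y hy => ?_⟩
        by_cases hyq : y = q
        · rw [hyq]
        · have h1 := hsep y q hy hq hyq
          have h8 : ‖y - q‖ ≤ ‖y - x‖ + ‖q - x‖ := by
            have := norm_sub_le (y - x) (q - x)
            rwa [sub_sub_sub_cancel_right] at this
          linarith
      · push Not at h
        exact ⟨β / 2, by positivity, fun y hy => h y hy⟩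
    obtain ⟨ψ, hcs, h2, h3, h4, h5⟩ := ex_bump d r hr0
    have hz : FF μ.mass ψ x = 0 := by
      by_contra hcon
      obtain ⟨y, hy, hy2⟩ := FF_ne _ _ _ hcon
      exact hy2 (h5 _ (hr y hy))
    have h6 := FF_VC μ ν hμ hν hF ψ τ hτ x
    rw [hz] at h6
    refine ⟨r / 2, by positivity, ?_⟩
    filter_upwards [(Metric.tendsto_nhds.1 h6) c hc] with k hk y hy
    by_contra hne
    have h7 := FF_re_ge μ hpos hμ ψ h2 _ y (h4 _ hy.le)
    have h8 := (hm y).resolve_left hne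
    rw [dist_zero_right] at hk
    have h9 := Complex.re_le_norm (FF μ.mass ψ (x + τ k))
    linarith

end glob


section fin
open FourierTransform

lemma ee_int (n : ℤ) : ee (n : ℝ) = 1 := by
  unfold ee
  rw [Complex.exp_eq_one_iff]
  refine ⟨n, ?_⟩
  push_cast
  ring

lemma reduce_freq (T : Ed d ≃ₗ[ℝ] Ed d) : ∃ B : ℝ, ∀ ω : Ed d, ∃ ω' : Ed d, ‖ω'‖ ≤ B ∧
    ∀ n : Fin d → ℤ, ee (inner ℝ (T (intv n)) ω) = ee (inner ℝ (T (intv n)) ω') := by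
  let A := T.toContinuousLinearEquiv
  let A' := ContinuousLinearMap.adjoint (A : Ed d →L[ℝ] Ed d)
  let B := ContinuousLinearMap.adjoint (A.symm : Ed d →L[ℝ] Ed d)
  refine ⟨‖B‖ * √(d : ℝ), fun ω => ?_⟩
  let w : Ed d := WithLp.toLp 2 fun i => Int.fract ((A' ω) i)
  refine ⟨B w, ?_, fun n => ?_⟩
  · refine (B.le_opNorm w).trans ?_
    gcongr
    rw [EuclideanSpace.norm_eq]
    apply Real.sqrt_le_sqrt
    calc ∑ i, ‖w i‖ ^ 2 ≤ ∑ i : Fin d, (1 : ℝ) := by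
          refine Finset.sum_le_sum fun i _ => ?_
          have h0 : 0 ≤ w i := Int.fract_nonneg _
          have h1 : w i < 1 := Int.fract_lt_one _
          rw [Real.norm_of_nonneg h0]
          nlinarith
      _ = d := by simp
  · have e1 : inner ℝ (T (intv n)) ω = (inner ℝ (intv n) (A' ω) : ℝ) := by
      rw [ContinuousLinearMap.adjoint_inner_right]; rfl
    have e2 : inner ℝ (T (intv n)) (B w) = (inner ℝ (intv n) w : ℝ) := by
      rw [ContinuousLinearMap.adjoint_inner_right]
      congr 1
      exact T.symm_apply_apply _
    have e3 : (inner ℝ (intv n) (A' ω) : ℝ) = inner ℝ (intv n) w + ((∑ i, n i * ⌊(A' ω) i⌋ : ℤ) : ℝ) := by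
      simp only [PiLp.inner_apply, intv_apply]
      push_cast
      rw [← Finset.sum_add_distrib]
      refine Finset.sum_congr rfl fun i _ => ?_
      have : w i = Int.fract ((A' ω) i) := rfl
      rw [this]
      have h := Int.fract_add_floor ((A' ω) i)
      simp only [RCLike.inner_apply, conj_trivial]
      nth_rewrite 1 [← h]
      ring
    rw [e1, e2, e3, ee_add, ee_int, mul_one]

lemma coset_dser (g : Ed d → ℂ) (hg : Summable fun ω => ‖g ω‖) (hgc : (Function.support g).Countable)
    (T : Ed d ≃ₗ[ℝ] Ed d) (l : Ed d) : ∃ (q : ℕ → ℂ) (ω : ℕ → Ed d), (Summable fun i => ‖q i‖) ∧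
    IsBounded (Set.range ω) ∧ ∀ y ∈ latt T l, dser q ω y = ∑' o, g o * ee (inner ℝ y o) := by
  obtain ⟨B, hB⟩ := reduce_freq T
  choose r hr1 hr2 using hB
  set S := Function.support g with hS
  haveI : Countable S := hgc.to_subtype
  obtain ⟨e, he⟩ := exists_injective_nat S
  let a : S → ℂ := fun s => g s * (ee (inner ℝ l (s : Ed d)) * ee (-inner ℝ l (r s)))
  refine ⟨Function.extend e a 0, Function.extend e (fun s => r s) 0, ?_, ?_, ?_⟩
  · have h1 : (fun i => ‖Function.extend e a 0 i‖) = Function.extend e (fun s => ‖a s‖) 0 := by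
      funext i
      by_cases hi : ∃ s, e s = i
      · obtain ⟨s, rfl⟩ := hi
        rw [he.extend_apply, he.extend_apply]
      · rw [Function.extend_apply' _ _ _ hi, Function.extend_apply' _ _ _ hi]; simp
    rw [h1, summable_extend_zero he]
    have h2 : (fun s : S => ‖a s‖) = (fun ω => ‖g ω‖) ∘ (Subtype.val : S → Ed d) := by
      funext s
      simp [a, ee_norm]
    rw [h2]
    exact hg.comp_injective Subtype.val_injective
  · rw [isBounded_iff_forall_norm_le]
    refine ⟨max B 0, ?_⟩
    rintro _ ⟨i, rfl⟩
    by_cases hi : ∃ s, e s = i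
    · obtain ⟨s, rfl⟩ := hi
      rw [he.extend_apply]
      exact (hr1 _).trans (le_max_left _ _)
    · rw [Function.extend_apply' _ _ _ hi]; simp
  · intro y hy
    obtain ⟨n, rfl⟩ := (mem_latt T l y).1 hy
    unfold dser
    have h1 : (fun i => Function.extend e a 0 i * Complex.exp (((2 * Real.pi *
        ⟪T (intv n) + l, Function.extend e (fun s : S => r s) 0 i⟫ : ℝ) : ℂ) * Complex.I)) =
        Function.extend e (fun s : S => g s * ee (inner ℝ (T (intv n) + l) (s : Ed d))) 0 := by
      funext i
      by_cases hi : ∃ s, e s = i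
      · obtain ⟨s, rfl⟩ := hi
        rw [he.extend_apply, he.extend_apply, he.extend_apply]
        change a s * ee (inner ℝ (T (intv n) + l) (r s)) = _
        simp only [a]
        rw [inner_add_left, inner_add_left, ee_add, ee_add, ← hr2]
        have h3 : ee (-inner ℝ l (r s)) * ee (inner ℝ l (r s)) = 1 := by
          rw [← ee_add, neg_add_cancel, ee_zero]
        linear_combination (g s * ee (inner ℝ l (s : Ed d)) * ee (inner ℝ (T (intv n)) (s : Ed d))) * h3
      · rw [Function.extend_apply' _ _ _ hi, Function.extend_apply' _ _ _ hi, Function.extend_apply' _ _ _ hi]; simp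
    rw [h1, tsum_extend_zero he]
    exact tsum_subtype_eq_of_support_subset (f := fun o => g o * ee (inner ℝ (T (intv n) + l) o))
      (Function.support_mul_subset_left _ _)

/-- Global uniform discreteness and lower mass bound. -/
lemma glob_all (μ μh : PPM (Ed d)) (hpos : μ.Nonneg) (hμ : PB μ.mass) (hν : PB μh.mass) (hF : IsFT μ μh)
    (x : ℕ → Ed d) (R : ℕ → ℝ) (hR : Tendsto R atTop atTop)
    (E : Set (Ed d)) (hE : E = ⋃ n : ℕ, ball (x n) (R n))
    (c β : ℝ) (hc : 0 < c) (hβ : 0 < β)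
    (hmass : ∀ l ∈ E ∩ Function.support μ.mass, c ≤ (μ.mass l).re)
    (hsep : ∀ l ∈ E ∩ Function.support μ.mass, ∀ l' ∈ E ∩ Function.support μ.mass,
      l ≠ l' → β ≤ ‖l - l'‖) :
    (∀ p, μ.mass p = 0 ∨ c ≤ ‖μ.mass p‖) ∧
    (∀ p q, μ.mass p ≠ 0 → μ.mass q ≠ 0 → p ≠ q → β ≤ ‖p - q‖) := by
  -- the sequence pushing everything into `E`
  obtain ⟨j0, l0, hQ, hz⟩ := ex_tau (Function.support μh.mass) μh.countable x
    (fun k j l => (k : ℝ) + ‖x j‖ ≤ R l) (fun k j => hR.eventually_ge_atTop _)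
  have hEE : ∀ p r, ∀ᶠ k in atTop, ball (p + (x (l0 k) - x (j0 k))) r ⊆ E := by
    intro p r
    filter_upwards [tendsto_natCast_atTop_atTop.eventually_ge_atTop (‖p‖ + r)] with k hk
    rw [hE]
    intro z hz
    refine Set.mem_iUnion.2 ⟨l0 k, ?_⟩
    rw [mem_ball, dist_eq_norm] at hz ⊢
    have h1 : z - x (l0 k) = (z - (p + (x (l0 k) - x (j0 k)))) + (p - x (j0 k)) := by abel
    rw [h1]
    have h2 := norm_add_le (z - (p + (x (l0 k) - x (j0 k)))) (p - x (j0 k))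
    have h3 := norm_sub_le p (x (j0 k))
    have h4 := hQ k
    linarith
  have hm : ∀ p, μ.mass p = 0 ∨ c ≤ ‖μ.mass p‖ := by
    intro p
    by_cases hp : μ.mass p = 0
    · exact Or.inl hp
    · exact Or.inr (glob_mass μ μh hpos hμ hν hF _ (fun ω h => hz ω h) E hEE c hmass p hp)
  have hs : ∀ p q, μ.mass p ≠ 0 → μ.mass q ≠ 0 → p ≠ q → β ≤ ‖p - q‖ := by
    intro p q hp hq hpq
    exact glob_sep μ μh hpos hμ hν hF _ (fun ω h => hz ω h) E hEE β hsep p q hp hq hpq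
  exact ⟨hm, hs⟩

/-- Lattice structure of the support. -/
lemma struct_all (μ μh : PPM (Ed d)) (hpos : μ.Nonneg) (hμ : PB μ.mass) (hν : PB μh.mass) (hF : IsFT μ μh)
    (c β : ℝ) (hc : 0 < c) (hβ : 0 < β)
    (hm : ∀ p, μ.mass p = 0 ∨ c ≤ ‖μ.mass p‖)
    (hs : ∀ p q, μ.mass p ≠ 0 → μ.mass q ≠ 0 → p ≠ q → β ≤ ‖p - q‖)
    (hgrow : ∃ C : ℝ, ∀ᶠ r : ℝ in atTop,
      μh.var (ball 0 r) ≤ ENNReal.ofReal (C * r ^ d)) :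
    ∃ (N : ℕ) (lam : Fin N → Ed d) (T : Fin N → (Ed d ≃ₗ[ℝ] Ed d)),
      (∀ j, μ.mass (lam j) ≠ 0) ∧ Function.support μ.mass = ⋃ j : Fin N, latt (T j) (lam j) ∧
      (∀ i j, ∀ x, x ∈ latt (T i) (lam i) → x ∈ latt (T j) (lam j) → i = j) := by
  obtain ⟨τ, hτ, hgen⟩ := ex_generic (Function.support μh.mass) μh.countable
  have hτ' : ∀ ω, μh.mass ω ≠ 0 → Tendsto (fun k => ee (inner ℝ (-τ k) ω)) atTop (𝓝 1) := by
    intro ω hω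
    have h1 := (Complex.continuous_conj.tendsto 1).comp (hτ ω hω)
    rw [map_one] at h1
    refine h1.congr fun k => ?_
    rw [inner_neg_left, ee_neg]; rfl
  have hrec := get_recur μ μh hpos hμ hν hF τ (fun ω h => hτ ω h) c β hc hβ hm hs
  have hrec' := get_recur μ μh hpos hμ hν hF (fun k => -τ k) hτ' c β hc hβ hm hs
  obtain ⟨H, i1, i2, i3, Rp, v, w, hrep⟩ := get_rep μ μh hμ hν hF hgrow
  exact struct_main hc hβ hm hs Rp v w hrep τ hrec hrec' hgen

theorem main_thm (μ μh : PPM (Ed d)) (hpos : μ.Nonneg) (hμt : μ.temperate) (hF : IsFT μ μh)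
    (x : ℕ → Ed d) (R : ℕ → ℝ) (hR : Tendsto R atTop atTop)
    (E : Set (Ed d)) (hE : E = ⋃ n : ℕ, ball (x n) (R n))
    (c β : ℝ) (hc : 0 < c) (hβ : 0 < β)
    (hmass : ∀ l ∈ E ∩ Function.support μ.mass, c ≤ (μ.mass l).re)
    (hsep : ∀ l ∈ E ∩ Function.support μ.mass, ∀ l' ∈ E ∩ Function.support μ.mass,
      l ≠ l' → β ≤ ‖l - l'‖)
    (hgrow : ∃ C : ℝ, ∀ᶠ r : ℝ in atTop,
      μh.var (ball 0 r) ≤ ENNReal.ofReal (C * r ^ d)) :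
    ∃ (N : ℕ) (lam : Fin N → Ed d) (T : Fin N → (Ed d ≃ₗ[ℝ] Ed d))
      (q : Fin N → ℕ → ℂ) (ω : Fin N → ℕ → Ed d),
      (∀ j, lam j ∈ Function.support μ.mass) ∧
      Function.support μ.mass = ⋃ j : Fin N, latt (T j) (lam j) ∧
      (∀ j, Summable fun i => ‖q j i‖) ∧
      (∀ j, IsBounded (Set.range (ω j))) ∧
      (∀ y : Ed d, μ.mass y =
        ∑ j : Fin N, Set.indicator (latt (T j) (lam j)) (dser (q j) (ω j)) y) := by
  classical
  have hν : PB μh.mass := (grow_scaled μh hgrow 0).1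
  have hμ : PB μ.mass := by
    obtain ⟨δ, hδ, K, hK, h⟩ := trans_bdd μ μh hpos hμt hF hν
    exact PB_of_trans μ hδ hK h
  obtain ⟨hm, hs⟩ := glob_all μ μh hpos hμ hν hF x R hR E hE c β hc hβ hmass hsep
  obtain ⟨N, lam, T, hlam, hsupp, hdisj⟩ := struct_all μ μh hpos hμ hν hF c β hc hβ hm hs hgrow
  -- Dirichlet series
  obtain ⟨ψ, hψc, h2, h3, h4, h5⟩ := ex_bump d β hβ
  have hval : ∀ y, μ.mass y ≠ 0 →
      μ.mass y = ∑' o, (μh.mass o * (𝓕⁻ ψ) o) * ee (inner ℝ y o) := by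
    intro y hy
    rw [← FF_eq μ μh hμ hν hF ψ y]
    symm
    refine FF_single _ _ _ _ (h4 _ (by simp; positivity)) fun z hz hzt => ?_
    by_contra hne
    exact hzt (h5 _ (hs z y hz hy hne))
  obtain ⟨g, hg⟩ : ∃ g : Ed d → ℂ, g = fun o => μh.mass o * (𝓕⁻ ψ) o := ⟨_, rfl⟩
  have hg1 : Summable fun o => ‖g o‖ := by
    rw [hg]
    exact hν.summ (𝓕⁻ ψ)
  have hg2 : (Function.support g).Countable := by
    have hsub : Function.support g ⊆ Function.support μh.mass := by
      intro o ho hcon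
      apply ho
      rw [hg]
      simp only [hcon, zero_mul]
    exact μh.countable.mono hsub
  have hval' : ∀ y, μ.mass y ≠ 0 → μ.mass y = ∑' o, g o * ee (inner ℝ y o) := by
    rw [hg]
    exact hval
  have hD := fun j => coset_dser g hg1 hg2 (T j) (lam j)
  choose q ω hq hω hdd using hD
  refine ⟨N, lam, T, q, ω, hlam, hsupp, hq, hω, fun y => ?_⟩
  by_cases hy : μ.mass y = 0
  · rw [hy]
    symm
    refine Finset.sum_eq_zero fun j _ => ?_
    apply Set.indicator_of_notMem
    intro hj
    have : y ∈ Function.support μ.mass := by rw [hsupp]; exact Set.mem_iUnion.2 ⟨j, hj⟩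
    exact this hy
  · have hy' : y ∈ Function.support μ.mass := hy
    rw [hsupp] at hy'
    obtain ⟨j, hj⟩ := Set.mem_iUnion.1 hy'
    rw [Finset.sum_eq_single j]
    · rw [Set.indicator_of_mem hj, hdd j y hj]
      exact hval' y hy
    · intro i _ hij
      apply Set.indicator_of_notMem
      intro hi
      exact hij (hdisj i j y hi hj)
    · simp

end fin


/-- Let `μ` be a non-negative Poisson measure on `ℝ^d` with Fourier transform
`μh`, let `E = ∪_n B(x_n,R_n)` with `R_n → ∞`, and assume `μ{λ} ≥ c > 0` and `|λ-λ'| ≥ β > 0`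
for all distinct `λ, λ' ∈ E ∩ supp μ`, and `|μ̂|(B(0,r)) = O(r^d)`. Then `supp μ` is a finite
union of translated lattices `T_j ℤ^d + λ_j` with `λ_j ∈ supp μ`, and
`μ = Σ_j Σ_{λ ∈ T_j ℤ^d + λ_j} Q_j(λ) δ_λ` with `Q_j` Dirichlet series with absolutely
summable coefficients and bounded spectrum. -/
theorem statement5 {d : ℕ} (μ μh : PPM (Ed d)) (hpos : μ.Nonneg)
    (hμlf : μ.locFinite) (hμt : μ.temperate)
    (hμhlf : μh.locFinite) (hF : IsFT μ μh)
    (x : ℕ → Ed d) (R : ℕ → ℝ) (hR : Tendsto R atTop atTop)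
    (E : Set (Ed d)) (hE : E = ⋃ n : ℕ, ball (x n) (R n))
    (c β : ℝ) (hc : 0 < c) (hβ : 0 < β)
    (hmass : ∀ l ∈ E ∩ Function.support μ.mass, c ≤ (μ.mass l).re)
    (hsep : ∀ l ∈ E ∩ Function.support μ.mass, ∀ l' ∈ E ∩ Function.support μ.mass,
      l ≠ l' → β ≤ ‖l - l'‖)
    (hgrow : ∃ C : ℝ, ∀ᶠ r : ℝ in atTop,
      μh.var (ball 0 r) ≤ ENNReal.ofReal (C * r ^ d)) :
    ∃ (N : ℕ) (lam : Fin N → Ed d) (T : Fin N → (Ed d ≃ₗ[ℝ] Ed d))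
      (q : Fin N → ℕ → ℂ) (ω : Fin N → ℕ → Ed d),
      (∀ j, lam j ∈ Function.support μ.mass) ∧
      Function.support μ.mass = ⋃ j : Fin N, latt (T j) (lam j) ∧
      (∀ j, Summable fun i => ‖q j i‖) ∧
      (∀ j, IsBounded (Set.range (ω j))) ∧
      (∀ y : Ed d, μ.mass y =
        ∑ j : Fin N, Set.indicator (latt (T j) (lam j)) (dser (q j) (ω j)) y) := by
  exact main_thm μ μh hpos hμt hF x R hR E hE c β hc hβ hmass hsep hgrow

end
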